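/- arXiv:2603.28138 — 2 statements merged into one kernel-verified Lean document; each statement's English description precedes it below -/
import Mathlib

section
/- Let u^{ε,R} ∈ C^∞(Ω̄_R^ε) be the k-convex solution of the approximating problem with α ≥ α₀. Then, with a* = (C_n^k)^{−1/k} (so S_k(a*I) = 1), one has 2a*ε ≤ |Du^{ε,R}| ≤ C_ε on ∂B_ε(x₀) and ½√(λ_min(A)R) ≤ |Du^{ε,R}| ≤ C√R on ∂E_R(0), where C is a positive constant depending only on n, k, λ_max(A), λ_min(A), R₀ and α and independent of ε and R, and C_ε = C(n/k − 2)ε^{−1} if k < n/2, C_ε = Cε^{−1}|log ε|^{−1} if k = n/2, C_ε = C(2 − n/k)ε^{1−n/k} if k > n/2. -/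
open scoped Classical Topology
open Real Filter MeasureTheory

noncomputable section

/-- Euclidean space ℝⁿ. -/
abbrev Euc (n : ℕ) : Type := EuclideanSpace ℝ (Fin n)

/-- The standard basis vector `e i`. -/
def ebasis (n : ℕ) (i : Fin n) : Euc n := EuclideanSpace.single i 1

/-- The Hessian matrix `D²u(x)`. -/
def hessMat (n : ℕ) (u : Euc n → ℝ) (x : Euc n) : Matrix (Fin n) (Fin n) ℝ :=
  Matrix.of fun i j => iteratedFDeriv ℝ 2 u x ![ebasis n i, ebasis n j]

/-- The Laplacian `Δu(x)` (trace of the Hessian). -/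
def lapl (n : ℕ) (u : Euc n → ℝ) (x : Euc n) : ℝ := ∑ i, hessMat n u x i i

/-- The `k`-th elementary symmetric function of the eigenvalues of an `n × n` matrix,
expressed through the coefficients of the characteristic polynomial. -/
def matSk (n k : ℕ) (M : Matrix (Fin n) (Fin n) ℝ) : ℝ :=
  (-1 : ℝ) ^ k * (Matrix.charpoly M).coeff (n - k)

/-- `S_k(D²u)(x)`. -/
def SkHess (n k : ℕ) (u : Euc n → ℝ) (x : Euc n) : ℝ := matSk n k (hessMat n u x)

/-- `u` is `k`-convex on `U`: the eigenvalues of the Hessian lie in the Gårding cone `Γ_k`. -/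
def KConvexOn (n k : ℕ) (u : Euc n → ℝ) (U : Set (Euc n)) : Prop :=
  ∀ x ∈ U, ∀ j : ℕ, 1 ≤ j → j ≤ k → 0 < matSk n j (hessMat n u x)

/-- Membership in the class `𝒜_k`: symmetric positive definite with `S_k(λ(A)) = 1`. -/
def MemA (n k : ℕ) (A : Matrix (Fin n) (Fin n) ℝ) : Prop :=
  A.IsSymm ∧ A.PosDef ∧ matSk n k A = 1

/-- The quadratic form `½ xᵀ A x`. -/
def quadA (n : ℕ) (A : Matrix (Fin n) (Fin n) ℝ) (x : Euc n) : ℝ :=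
  (1 / 2) * ∑ i, ∑ j, x i * A i j * x j

/-- The linear form `b ⋅ x`. -/
def linB (n : ℕ) (b x : Euc n) : ℝ := ∑ i, b i * x i

/-- `λ_max(A) < c`, expressed through the quadratic form (for symmetric `A`). -/
def lambdaMaxLT (n : ℕ) (A : Matrix (Fin n) (Fin n) ℝ) (c : ℝ) : Prop :=
  ∀ x : Euc n, x ≠ 0 → ∑ i, ∑ j, x i * A i j * x j < c * ‖x‖ ^ 2

/-- `u` is smooth on an open neighbourhood of the (closed) set `S`;
this is our rendering of `u ∈ C^∞(S)` for a closed set `S`. -/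
def SmoothOnNhd (n : ℕ) (u : Euc n → ℝ) (S : Set (Euc n)) : Prop :=
  ∃ U : Set (Euc n), IsOpen U ∧ S ⊆ U ∧ ContDiffOn ℝ (⊤ : ℕ∞) u U

/-- A smooth bounded strictly convex domain in ℝⁿ. -/
def SmoothStrictConvexDomain (n : ℕ) (Ω : Set (Euc n)) : Prop :=
  IsOpen Ω ∧ Bornology.IsBounded Ω ∧ Ω.Nonempty ∧ Convex ℝ Ω ∧ StrictConvex ℝ Ω ∧
    ∃ f : Euc n → ℝ, ContDiff ℝ (⊤ : ℕ∞) f ∧ Ω = {x | f x < 0} ∧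
      ∀ x ∈ frontier Ω, fderiv ℝ f x ≠ 0

/-- Extension of `u` by the constant value `v` inside `Ω`. -/
def extBy (n : ℕ) (Ω : Set (Euc n)) (v : ℝ) (u : Euc n → ℝ) : Euc n → ℝ :=
  fun x => if x ∈ Ω then v else u x

/-- `u` (vanishing on `∂Ω`) is quasiconvex: all sublevel sets of its zero-extension are convex. -/
def QuasiconvexSol (n : ℕ) (Ω : Set (Euc n)) (u : Euc n → ℝ) : Prop :=
  ∀ t : ℝ, Convex ℝ {x : Euc n | extBy n Ω 0 u x ≤ t}

/-- The `k`-th elementary symmetric polynomial of a vector `a ∈ ℝⁿ`. -/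
def esymmVec (n k : ℕ) (a : Fin n → ℝ) : ℝ :=
  ∑ s ∈ Finset.powersetCard k (Finset.univ : Finset (Fin n)), ∏ i ∈ s, a i

/-- `h_k(a) = max_i S_{k-1}(a)|_{a_i = 0} · a_i`. -/
def hkfun (n k : ℕ) (a : Fin n → ℝ) : ℝ :=
  ⨆ i : Fin n, esymmVec n (k - 1) (Function.update a i 0) * a i

/-- The exponent `-k / (2 h_k(a))`. -/
def genExp (n k : ℕ) (a : Fin n → ℝ) : ℝ := -(k : ℝ) / (2 * hkfun n k a)

/-- The integrand `(1 + α t^{-k/(2h_k(a))})^{1/k}`. -/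
def genInt (n k : ℕ) (a : Fin n → ℝ) (α t : ℝ) : ℝ :=
  (1 + α * t ^ genExp n k a) ^ ((1 : ℝ) / (k : ℝ))

/-- The generalized symmetric function `ū`. -/
def ubar (n k : ℕ) (a : Fin n → ℝ) (R₀ α : ℝ) (x : Euc n) : ℝ :=
  ∫ t in R₀..(quadA n (Matrix.diagonal a) x), genInt n k a α t

/-- `μ(α) = ∫_{R₀}^∞ ((1 + α t^{-k/(2h_k(a))})^{1/k} - 1) dt - R₀`. -/
def muA (n k : ℕ) (a : Fin n → ℝ) (R₀ α : ℝ) : ℝ :=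
  (∫ t in Set.Ioi R₀, (genInt n k a α t - 1)) - R₀

/-- The ellipsoid `E_R(xb) = {x : ½ (x - xb)ᵀ A (x - xb) < R}`. -/
def ESet (n : ℕ) (A : Matrix (Fin n) (Fin n) ℝ) (xb : Euc n) (R : ℝ) : Set (Euc n) :=
  {x : Euc n | quadA n A (x - xb) < R}

/-- The non-concentric convex ring `Ω_R^ε = E_R(0) ∖ B̄_ε(x₀)`. -/
def OmegaRe (n : ℕ) (a : Fin n → ℝ) (x₀ : Euc n) (ε R : ℝ) : Set (Euc n) :=
  ESet n (Matrix.diagonal a) 0 R \ closure (Metric.ball x₀ ε)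

/-- `u` is a `k`-convex solution of the approximating problem
`S_k(D²u) = 1` in `Ω_R^ε`, `u = 0` on `∂B_ε(x₀)`, `u = ū` on `∂E_R(0)`. -/
def ApproxSol (n k : ℕ) (a : Fin n → ℝ) (x₀ : Euc n) (ε R R₀ α : ℝ)
    (u : Euc n → ℝ) : Prop :=
  SmoothOnNhd n u (closure (OmegaRe n a x₀ ε R)) ∧
  KConvexOn n k u (OmegaRe n a x₀ ε R) ∧
  (∀ x ∈ OmegaRe n a x₀ ε R, SkHess n k u x = 1) ∧
  (∀ x ∈ Metric.sphere x₀ ε, u x = 0) ∧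
  (∀ x : Euc n, quadA n (Matrix.diagonal a) x = R → u x = ubar n k a R₀ α x)

/-- The constant `C_ε` of the boundary gradient estimate. -/
def Ceps (n k : ℕ) (C ε : ℝ) : ℝ :=
  if 2 * k < n then C * ((n : ℝ) / (k : ℝ) - 2) * ε⁻¹
  else if 2 * k = n then C * ε⁻¹ * |Real.log ε|⁻¹
  else C * (2 - (n : ℝ) / (k : ℝ)) * ε ^ (1 - (n : ℝ) / (k : ℝ))

/-- `u` is a `k`-convex solution of the exterior Dirichlet problem
`S_k(D²u) = 1` in `ℝⁿ ∖ B̄_ε(x₀)`, `u = 0` on `∂B_ε(x₀)`, with quadratic asymptotics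
`½ xᵀAx + c` at infinity (`A = diag a`). -/
def ExtBallSol (n k : ℕ) (a : Fin n → ℝ) (x₀ : Euc n) (ε c : ℝ) (u : Euc n → ℝ) : Prop :=
  SmoothOnNhd n u (Metric.ball x₀ ε)ᶜ ∧
  KConvexOn n k u (closure (Metric.ball x₀ ε))ᶜ ∧
  (∀ x ∈ (closure (Metric.ball x₀ ε))ᶜ, SkHess n k u x = 1) ∧
  (∀ x ∈ Metric.sphere x₀ ε, u x = 0) ∧
  Tendsto (fun x : Euc n => u x - (quadA n (Matrix.diagonal a) x + c))
    (cocompact (Euc n)) (𝓝 0)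

/-- `u` is a `k`-convex solution of the exterior Dirichlet problem on `ℝⁿ ∖ Ω₀` with
asymptotics `½ xᵀAx + b·x + c` at infinity. -/
def ExtDomSol (n k : ℕ) (Ω₀ : Set (Euc n)) (A : Matrix (Fin n) (Fin n) ℝ) (b : Euc n)
    (c : ℝ) (u : Euc n → ℝ) : Prop :=
  SmoothOnNhd n u Ω₀ᶜ ∧
  KConvexOn n k u (closure Ω₀)ᶜ ∧
  (∀ x ∈ (closure Ω₀)ᶜ, SkHess n k u x = 1) ∧
  (∀ x ∈ frontier Ω₀, u x = 0) ∧
  Tendsto (fun x : Euc n => u x - (quadA n A x + linB n b x + c))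
    (cocompact (Euc n)) (𝓝 0)

/-- `u` is a solution of the exterior Dirichlet problem for the Laplace equation
`Δu = 1` on `ℝⁿ ∖ Ω₀` with asymptotics `½ xᵀAx + b·x + c` at infinity. -/
def ExtDomSolLap (n : ℕ) (Ω₀ : Set (Euc n)) (A : Matrix (Fin n) (Fin n) ℝ) (b : Euc n)
    (c : ℝ) (u : Euc n → ℝ) : Prop :=
  SmoothOnNhd n u Ω₀ᶜ ∧
  (∀ x ∈ (closure Ω₀)ᶜ, lapl n u x = 1) ∧
  (∀ x ∈ frontier Ω₀, u x = 0) ∧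
  Tendsto (fun x : Euc n => u x - (quadA n A x + linB n b x + c))
    (cocompact (Euc n)) (𝓝 0)

/-- `u` solves the exterior problem `Δu = 0` in `ℝⁿ ∖ Ω̄`, `u = 1` on `∂Ω`,
`u → 0` at infinity. -/
def HarmExtSol (n : ℕ) (Ω : Set (Euc n)) (u : Euc n → ℝ) : Prop :=
  SmoothOnNhd n u Ωᶜ ∧
  (∀ x ∈ (closure Ω)ᶜ, lapl n u x = 0) ∧
  (∀ x ∈ frontier Ω, u x = 1) ∧
  Tendsto u (cocompact (Euc n)) (𝓝 0)

end

open Polynomial in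
lemma nw_splits_deriv (p : ℝ[X]) (hp : p.Splits) : p.derivative.Splits := by
  by_cases h0 : p.natDegree = 0
  · rw [Polynomial.eq_C_of_natDegree_eq_zero h0]; simp
  · rw [splits_iff_card_roots]
    have h1 := card_roots_le_derivative p
    have h2 := splits_iff_card_roots.1 hp
    have h3 : p.derivative.natDegree = p.natDegree - 1 := natDegree_derivative p
    have h4 := card_roots' p.derivative
    omega

open Polynomial in
lemma nw_base (p : ℝ[X]) (hp : p.Splits) :
    2 * p.coeff 0 * p.coeff 2 ≤ p.coeff 1 ^ 2 := by
  have key : ∀ s : Multiset ℝ, 2 * (s.map fun t => X - C t).prod.coeff 0 *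
      (s.map fun t => X - C t).prod.coeff 2 ≤ (s.map fun t => X - C t).prod.coeff 1 ^ 2 := by
    intro s
    induction s using Multiset.induction_on with
    | empty => simp [coeff_one]
    | cons r s ih =>
      rw [Multiset.map_cons, Multiset.prod_cons]
      set q := (s.map fun t => X - C t).prod
      have e0 : ((X - C r) * q).coeff 0 = - r * q.coeff 0 := by simp [sub_mul]
      have e1 : ((X - C r) * q).coeff 1 = q.coeff 0 - r * q.coeff 1 := by
        simp [sub_mul, coeff_X_mul q 0]
      have e2 : ((X - C r) * q).coeff 2 = q.coeff 1 - r * q.coeff 2 := by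
        simp [sub_mul, coeff_X_mul q 1]
      rw [e0, e1, e2]
      nlinarith [mul_nonneg (sq_nonneg r) (sub_nonneg.2 ih), sq_nonneg (q.coeff 0)]
  rw [hp.eq_prod_roots]
  simp only [coeff_C_mul]
  have := key p.roots
  nlinarith [mul_nonneg (sq_nonneg p.leadingCoeff) (sub_nonneg.2 this)]

open Polynomial in
lemma nw_coeff (j : ℕ) : ∀ (p : ℝ[X]) (_ : p.Splits),
    p.coeff j * p.coeff (j + 2) ≤ p.coeff (j + 1) ^ 2 := by
  intro p hp
  have hs : ∀ m : ℕ, (derivative^[m] p).Splits := by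
    intro m
    induction m with
    | zero => exact hp
    | succ m ih => rw [Function.iterate_succ_apply']; exact nw_splits_deriv _ ih
  have h := nw_base _ (hs j)
  simp only [coeff_iterate_derivative, zero_add] at h
  have d0 : j.descFactorial j = j.factorial := Nat.descFactorial_self j
  have d1 : (1 + j).descFactorial j = (j+1).factorial := by
    have := Nat.factorial_mul_descFactorial (n := 1 + j) (k := j) (by omega)
    rw [Nat.add_sub_cancel] at this
    rw [add_comm j 1]; simpa using this
  have d2 : 2 * (2 + j).descFactorial j = (j+2).factorial := by
    have := Nat.factorial_mul_descFactorial (n := 2 + j) (k := j) (by omega)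
    rw [Nat.add_sub_cancel] at this
    rw [add_comm j 2]; simpa using this
  simp only [nsmul_eq_mul] at h
  have d2' : (2:ℝ) * ((2 + j).descFactorial j : ℝ) = (j + 2) * ((j + 1) * (j.factorial : ℝ)) := by
    have := congrArg (Nat.cast (R := ℝ)) d2
    push_cast [Nat.factorial_succ] at this
    linarith
  have d1' : ((1 + j).descFactorial j : ℝ) = (j + 1) * (j.factorial : ℝ) := by
    rw [d1]; push_cast [Nat.factorial_succ]; ring
  rw [d0, d1'] at h
  have hf : (0:ℝ) < (j.factorial : ℝ) := by positivity
  have hh : ((j:ℝ) + 2) * (p.coeff j * p.coeff (j + 2)) ≤ (j + 1) * p.coeff (j + 1) ^ 2 := by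
    have hpos : (0:ℝ) < (j + 1) * (j.factorial:ℝ) ^ 2 := by positivity
    refine le_of_mul_le_mul_left ?_ hpos
    rw [add_comm 2 j, add_comm 1 j] at h
    rw [add_comm 2 j] at d2'
    have e : ((j:ℝ) + 1) * (j.factorial:ℝ) ^ 2 * (((j:ℝ) + 2) * (p.coeff j * p.coeff (j + 2)))
        = (j.factorial : ℝ) * (2 * ((j + 2).descFactorial j : ℝ)) * (p.coeff j * p.coeff (j + 2)) := by
      rw [d2']; ring
    rw [e]
    nlinarith [h]
  by_cases hneg : p.coeff j * p.coeff (j + 2) ≤ 0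
  · exact hneg.trans (sq_nonneg _)
  · push Not at hneg
    have : (0:ℝ) ≤ j := Nat.cast_nonneg j
    nlinarith

open Polynomial in
lemma nw_prod_coeff (n j : ℕ) (hj : j ≤ n) (b : Fin n → ℝ) :
    (∏ i, (X - C (b i))).coeff (n - j) = (-1) ^ j * esymmVec n j b := by
  have h := Finset.prod_X_add_C_coeff (Finset.univ : Finset (Fin n)) (fun i => - b i)
    (k := n - j) (by simp)
  have e : ∏ i, (X - C (b i)) = ∏ i, (X + C (- b i)) := by
    refine Finset.prod_congr rfl fun i _ => ?_
    rw [map_neg, sub_eq_add_neg]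
  rw [e, h, esymmVec, Finset.mul_sum]
  have : (Finset.univ : Finset (Fin n)).card - (n - j) = j := by simp; omega
  rw [this]
  refine Finset.sum_congr rfl fun t ht => ?_
  rw [Finset.prod_neg, (Finset.mem_powersetCard.1 ht).2]

lemma nw_esymm_zero (n : ℕ) (b : Fin n → ℝ) : esymmVec n 0 b = 1 := by
  simp [esymmVec]

lemma nw_esymm_gt (n j : ℕ) (hj : n < j) (b : Fin n → ℝ) : esymmVec n j b = 0 := by
  rw [esymmVec, Finset.powersetCard_eq_empty.2 (by simpa using hj)]; simp

open Polynomial in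
lemma nw_newton (n j : ℕ) (b : Fin n → ℝ) :
    esymmVec n j b * esymmVec n (j + 2) b ≤ esymmVec n (j + 1) b ^ 2 := by
  by_cases hj : j + 2 ≤ n
  · have h := nw_coeff (n - (j + 2)) (∏ i, (X - C (b i)))
      (Splits.prod fun i _ => Splits.X_sub_C _)
    have e1 : n - (j + 2) + 2 = n - j := by omega
    have e2 : n - (j + 2) + 1 = n - (j + 1) := by omega
    rw [e1, e2, nw_prod_coeff n _ hj, nw_prod_coeff n _ (by omega), nw_prod_coeff n _ (by omega)] at h
    have hs : ((-1 : ℝ) ^ j) ^ 2 = 1 := by rw [← pow_mul, mul_comm, pow_mul]; simp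
    have h1 : (-1 : ℝ) ^ (j + 2) * esymmVec n (j + 2) b * ((-1) ^ j * esymmVec n j b)
      = ((-1 : ℝ) ^ j) ^ 2 * (esymmVec n j b * esymmVec n (j + 2) b) := by ring
    have h2 : ((-1 : ℝ) ^ (j + 1) * esymmVec n (j + 1) b) ^ 2
      = ((-1 : ℝ) ^ j) ^ 2 * esymmVec n (j + 1) b ^ 2 := by ring
    rw [h1, h2, hs] at h
    linarith
  · rw [nw_esymm_gt n (j + 2) (by omega)]; simp; positivity

open Polynomial in
lemma nw_upd_prod (n : ℕ) (b : Fin n → ℝ) (i : Fin n) :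
    ∏ l, (X - C (Function.update b i 0 l)) = X * ∏ l ∈ Finset.univ.erase i, (X - C (b l)) := by
  rw [← Finset.mul_prod_erase Finset.univ _ (Finset.mem_univ i)]
  congr 1
  · simp
  · refine Finset.prod_congr rfl fun l hl => ?_
    rw [Function.update_of_ne (Finset.ne_of_mem_erase hl)]

open Polynomial in
lemma nw_erase_coeff (n j : ℕ) (hj : j + 1 ≤ n) (b : Fin n → ℝ) (i : Fin n) :
    (∏ l ∈ Finset.univ.erase i, (X - C (b l))).coeff (n - (j + 1))
      = (-1) ^ j * esymmVec n j (Function.update b i 0) := by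
  rw [← nw_prod_coeff n j (by omega), nw_upd_prod]
  have : n - j = (n - (j + 1)) + 1 := by omega
  rw [this, coeff_X_mul]

open Polynomial in
lemma nw_esymm_rec (n j : ℕ) (b : Fin n → ℝ) (i : Fin n) :
    esymmVec n (j + 1) b = esymmVec n (j + 1) (Function.update b i 0)
      + b i * esymmVec n j (Function.update b i 0) := by
  have hn0 : 0 < n := i.pos
  by_cases hj : j + 1 ≤ n
  · have h := nw_prod_coeff n (j + 1) hj b
    rw [← Finset.mul_prod_erase Finset.univ _ (Finset.mem_univ i), sub_mul, ← nw_upd_prod,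
      coeff_sub, coeff_C_mul, nw_erase_coeff n j hj, nw_prod_coeff n _ hj] at h
    have hs : ((-1 : ℝ) ^ j) ≠ 0 := by positivity
    have : (-1 : ℝ) ^ j * esymmVec n (j + 1) b = (-1 : ℝ) ^ j * (esymmVec n (j + 1) (Function.update b i 0)
      + b i * esymmVec n j (Function.update b i 0)) := by
      linear_combination h
    exact mul_left_cancel₀ hs this
  · push Not at hj
    rw [nw_esymm_gt n _ hj, nw_esymm_gt n _ hj]
    by_cases hj2 : n < j
    · rw [nw_esymm_gt n _ hj2]; simp
    · have : j = n := by omega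
      subst this
      have h0 : esymmVec j j (Function.update b i 0) = 0 := by
        rw [esymmVec]
        have : Finset.powersetCard j (Finset.univ : Finset (Fin j)) = {Finset.univ} := by
          have := Finset.powersetCard_self (Finset.univ : Finset (Fin j))
          simpa using this
        rw [this, Finset.sum_singleton]
        exact Finset.prod_eq_zero (Finset.mem_univ i) (by simp)
      rw [h0]; simp

open Polynomial in
lemma nw_charpoly_rank_one (n : ℕ) (b y : Fin n → ℝ) (c : ℝ) :
    (Matrix.diagonal b + c • Matrix.vecMulVec y y).charpoly =
      ∏ i, (X - C (b i)) - ∑ i, C (c * y i ^ 2) * ∏ l ∈ Finset.univ.erase i, (X - C (b l)) := by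
  refine Polynomial.eq_of_infinite_eval_eq _ _ ?_
  have hfin : (Set.range b).Finite := Set.finite_range b
  refine hfin.infinite_compl.mono ?_
  intro t ht
  have ht' : ∀ i, t - b i ≠ 0 := by
    intro i hi
    exact ht ⟨i, by linarith⟩
  rw [Set.mem_ofPred_eq, Matrix.eval_charpoly]
  simp only [eval_sub, eval_prod, eval_X, eval_C, eval_finsetSum, eval_mul]
  have e : Matrix.scalar (Fin n) t - (Matrix.diagonal b + c • Matrix.vecMulVec y y)
      = Matrix.diagonal (fun i => t - b i) +
        Matrix.replicateCol Unit (fun i => -c * y i) * Matrix.replicateRow Unit y := by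
    ext i j
    simp [Matrix.scalar_apply, Matrix.diagonal_apply, Matrix.vecMulVec_apply, Matrix.mul_apply]
    split_ifs <;> ring
  have hdet : (Matrix.diagonal (fun i => t - b i)).det = ∏ i, (t - b i) := Matrix.det_diagonal
  have hu : IsUnit (Matrix.diagonal (fun i => t - b i)).det := by
    rw [hdet, isUnit_iff_ne_zero]; exact Finset.prod_ne_zero_iff.2 fun i _ => ht' i
  rw [e, Matrix.det_add_replicateCol_mul_replicateRow hu, hdet]
  have hinv : (Matrix.diagonal (fun i => t - b i))⁻¹ = Matrix.diagonal (fun i => (t - b i)⁻¹) := by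
    refine Matrix.inv_eq_right_inv ?_
    rw [Matrix.diagonal_mul_diagonal, ← Matrix.diagonal_one]
    congr 1; ext i; exact mul_inv_cancel₀ (ht' i)
  rw [hinv, Matrix.det_unique]
  simp only [Matrix.add_apply, Matrix.one_apply_eq, Matrix.mul_apply, Matrix.diagonal_apply, mul_ite, mul_zero,
    Finset.sum_ite_eq', Finset.mem_univ, if_true,
    Matrix.replicateRow_apply, Matrix.replicateCol_apply]
  rw [mul_add, mul_one, sub_eq_add_neg, Finset.mul_sum, ← Finset.sum_neg_distrib]
  congr 1
  refine Finset.sum_congr rfl fun i _ => ?_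
  rw [← Finset.mul_prod_erase Finset.univ _ (Finset.mem_univ i)]
  have := ht' i
  field_simp

lemma nw_matSk_rank_one (n k : ℕ) (hk : k + 1 ≤ n) (b y : Fin n → ℝ) (c : ℝ) :
    matSk n (k + 1) (Matrix.diagonal b + c • Matrix.vecMulVec y y) =
      esymmVec n (k + 1) b + c * ∑ i, y i ^ 2 * esymmVec n k (Function.update b i 0) := by
  rw [matSk, nw_charpoly_rank_one, Polynomial.coeff_sub, nw_prod_coeff n _ hk,
    Polynomial.finsetSum_coeff]
  simp only [Polynomial.coeff_C_mul, nw_erase_coeff n k hk]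
  have hs : ((-1 : ℝ) ^ k) ^ 2 = 1 := by rw [← pow_mul, mul_comm, pow_mul]; simp
  have : ∑ i, c * y i ^ 2 * ((-1) ^ k * esymmVec n k (Function.update b i 0))
    = (-1) ^ k * (c * ∑ i, y i ^ 2 * esymmVec n k (Function.update b i 0)) := by
    rw [Finset.mul_sum, Finset.mul_sum]
    exact Finset.sum_congr rfl fun i _ => by ring
  rw [this]
  linear_combination (esymmVec n (k + 1) b + c * ∑ i, y i ^ 2 * esymmVec n k (Function.update b i 0)) * hs

lemma nw_matSk_diag (n k : ℕ) (hk : k ≤ n) (b : Fin n → ℝ) :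
    matSk n k (Matrix.diagonal b) = esymmVec n k b := by
  rw [matSk, Matrix.charpoly_diagonal, nw_prod_coeff n _ hk]
  have hs : ((-1 : ℝ) ^ k) ^ 2 = 1 := by rw [← pow_mul, mul_comm, pow_mul]; simp
  linear_combination (esymmVec n k b) * hs

/-- Garding cone: restriction. -/
lemma nw_garding (n k : ℕ) (b : Fin n → ℝ) (i : Fin n) :
    (∀ j, 1 ≤ j → j ≤ k + 1 → 0 < esymmVec n j b) → 0 < esymmVec n k (Function.update b i 0) := by
  induction k with
  | zero => intro _; rw [nw_esymm_zero]; norm_num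
  | succ k ih =>
    intro h
    have h0 := ih fun j h1 h2 => h j h1 (by omega)
    have h1 := h (k + 1) (by omega) (by omega)
    have h2 := h (k + 2) (by omega) (by omega)
    rw [nw_esymm_rec n _ b i] at h1 h2
    have hN := nw_newton n k (Function.update b i 0)
    by_contra hc
    push Not at hc
    set σ0 := esymmVec n k (Function.update b i 0)
    set σ1 := esymmVec n (k + 1) (Function.update b i 0)
    set σ2 := esymmVec n (k + 2) (Function.update b i 0)
    have hb : 0 < b i := by
      by_contra hb; push Not at hb
      nlinarith
    nlinarith [mul_pos h0 h2, mul_nonneg (neg_nonneg.2 hc) h1.le]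

/-- The open Garding cone for matrices. -/
def GCone (n k : ℕ) (M : Matrix (Fin n) (Fin n) ℝ) : Prop :=
  ∀ j : ℕ, 1 ≤ j → j ≤ k → 0 < matSk n j M

lemma gd_diagonalize (n : ℕ) (M : Matrix (Fin n) (Fin n) ℝ) (hM : M.IsSymm) (y : Fin n → ℝ) :
    ∃ d z : Fin n → ℝ, M.charpoly = (Matrix.diagonal d).charpoly ∧
      (M + Matrix.vecMulVec y y).charpoly =
        (Matrix.diagonal d + (1:ℝ) • Matrix.vecMulVec z z).charpoly := by
  have hH : M.IsHermitian := by
    rw [Matrix.IsHermitian, Matrix.conjTranspose_eq_transpose_of_trivial]; exact hM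
  set U : Matrix (Fin n) (Fin n) ℝ := hH.eigenvectorUnitary.1 with hU
  have hUU : star U * U = 1 := Unitary.coe_star_mul_self _
  have hUU' : U * star U = 1 := Unitary.coe_mul_star_self _
  have hspec : M = U * Matrix.diagonal hH.eigenvalues * star U := by
    have := hH.spectral_theorem
    rw [Unitary.conjStarAlgAut_apply] at this
    exact this
  have hstar : star U = U.transpose := by
    rw [Matrix.star_eq_conjTranspose, Matrix.conjTranspose_eq_transpose_of_trivial]
  have conj : ∀ N, (U * N * star U).charpoly = N.charpoly := by
    intro N
    rw [Matrix.charpoly_mul_comm, ← mul_assoc, hUU, one_mul]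
  refine ⟨hH.eigenvalues, (star U).mulVec y, ?_, ?_⟩
  · conv_lhs => rw [hspec]
    exact conj _
  · rw [← conj (Matrix.diagonal hH.eigenvalues + _), one_smul, mul_add, add_mul, ← hspec]
    congr 2
    rw [Matrix.mul_vecMulVec, Matrix.vecMulVec_mul, Matrix.mulVec_mulVec, hUU', Matrix.one_mulVec]
    congr 1
    rw [hstar, Matrix.mulVec_transpose, Matrix.vecMul_vecMul, ← hstar, hUU', Matrix.vecMul_one]

lemma gd_rank_one (n k : ℕ) (hk : k ≤ n) (M : Matrix (Fin n) (Fin n) ℝ) (hM : M.IsSymm)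
    (hG : GCone n k M) (y : Fin n → ℝ) :
    ∀ j, 1 ≤ j → j ≤ k → matSk n j M ≤ matSk n j (M + Matrix.vecMulVec y y) := by
  obtain ⟨d, z, h1, h2⟩ := gd_diagonalize n M hM y
  have e1 : ∀ j, matSk n j M = matSk n j (Matrix.diagonal d) := fun j => by rw [matSk, h1, matSk]
  have e2 : ∀ j, matSk n j (M + Matrix.vecMulVec y y) = matSk n j (Matrix.diagonal d
     + (1:ℝ) • Matrix.vecMulVec z z) := fun j => by rw [matSk, h2, matSk]
  intro j hj1 hjk
  obtain ⟨m, rfl⟩ : ∃ m, j = m + 1 := ⟨j - 1, by omega⟩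
  rw [e1, e2, nw_matSk_rank_one n m (by omega), nw_matSk_diag n _ (by omega)]
  have : 0 ≤ ∑ i, z i ^ 2 * esymmVec n m (Function.update d i 0) := by
    refine Finset.sum_nonneg fun i _ => mul_nonneg (sq_nonneg _) (le_of_lt ?_)
    refine nw_garding n m d i fun l hl1 hl2 => ?_
    rw [← nw_matSk_diag n l (by omega), ← e1]
    exact hG l hl1 (by omega)
  linarith

lemma gd_mono (n k : ℕ) (hk1 : 1 ≤ k) (hk : k ≤ n) (M P : Matrix (Fin n) (Fin n) ℝ) (hM : M.IsSymm)
    (hG : GCone n k M) (hP : P.PosSemidef) : matSk n k M ≤ matSk n k (M + P) := by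
  obtain ⟨m, v, rfl⟩ := Matrix.posSemidef_iff_eq_sum_vecMulVec.1 hP
  have key : ∀ s : Finset (Fin m), (M + ∑ i ∈ s, Matrix.vecMulVec (v i) (star (v i))).IsSymm ∧
      GCone n k (M + ∑ i ∈ s, Matrix.vecMulVec (v i) (star (v i))) ∧
      matSk n k M ≤ matSk n k (M + ∑ i ∈ s, Matrix.vecMulVec (v i) (star (v i))) := by
    intro s
    induction s using Finset.induction_on with
    | empty => simpa using ⟨hM, hG⟩
    | insert i s hi ih =>
      obtain ⟨i1, i2, i3⟩ := ih
      have e : M + ∑ i ∈ insert i s, Matrix.vecMulVec (v i) (star (v i)) =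
        (M + ∑ i ∈ s, Matrix.vecMulVec (v i) (star (v i))) + Matrix.vecMulVec (v i) (v i) := by
        rw [Finset.sum_insert hi, star_trivial, add_assoc, add_comm (Matrix.vecMulVec _ _)]
      rw [e]
      have hr := gd_rank_one n k hk _ i1 i2 (v i)
      refine ⟨?_, fun j h1 h2 => (i2 j h1 h2).trans_le (hr j h1 h2), i3.trans (hr k hk1 le_rfl)⟩
      refine i1.add ?_
      rw [Matrix.IsSymm, Matrix.transpose_vecMulVec]
  exact (key Finset.univ).2.2

/-- positivity of lower order symmetric functions for `diag b + c y yᵀ`, `c ≤ 0`. -/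
lemma gd_lower (n k : ℕ) (hk : k ≤ n) (b y : Fin n → ℝ) (hb : ∀ i, 0 < b i) (c : ℝ) (hc : c ≤ 0)
    (h : 0 < matSk n k (Matrix.diagonal b + c • Matrix.vecMulVec y y)) :
    GCone n k (Matrix.diagonal b + c • Matrix.vecMulVec y y) := by
  have hpos : ∀ j ≤ n, 0 < esymmVec n j b := by
    intro j hj
    refine Finset.sum_pos (fun s _ => Finset.prod_pos fun i _ => hb i) ?_
    exact Finset.powersetCard_nonempty.2 (by simpa using hj)
  have hnn : ∀ i j, 0 ≤ esymmVec n j (Function.update b i 0) := by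
    intro i j
    refine Finset.sum_nonneg fun s _ => Finset.prod_nonneg fun l _ => ?_
    by_cases hl : l = i
    · subst hl; simp
    · rw [Function.update_of_ne hl]; exact (hb l).le
  have step : ∀ j, j + 2 ≤ n → 0 < matSk n (j + 2) (Matrix.diagonal b + c • Matrix.vecMulVec y y) →
      0 < matSk n (j + 1) (Matrix.diagonal b + c • Matrix.vecMulVec y y) := by
    intro j hj hp
    rw [nw_matSk_rank_one n (j + 1) hj] at hp
    rw [nw_matSk_rank_one n j (by omega)]
    have hle : ∀ i, esymmVec n j (Function.update b i 0) * esymmVec n (j + 2) b ≤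
        esymmVec n (j + 1) (Function.update b i 0) * esymmVec n (j + 1) b := by
      intro i
      rw [nw_esymm_rec n (j + 1) b i, nw_esymm_rec n j b i]
      nlinarith [nw_newton n j (Function.update b i 0)]
    have hsum : (∑ i, y i ^ 2 * esymmVec n j (Function.update b i 0)) * esymmVec n (j + 2) b ≤
       (∑ i, y i ^ 2 * esymmVec n (j + 1) (Function.update b i 0)) * esymmVec n (j + 1) b := by
      rw [Finset.sum_mul, Finset.sum_mul]
      refine Finset.sum_le_sum fun i _ => ?_
      rw [mul_assoc, mul_assoc]
      exact mul_le_mul_of_nonneg_left (hle i) (sq_nonneg _)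
    have p1 := hpos (j + 1) (by omega)
    have p2 := hpos (j + 2) hj
    set S0 := ∑ i, y i ^ 2 * esymmVec n j (Function.update b i 0)
    set S1 := ∑ i, y i ^ 2 * esymmVec n (j + 1) (Function.update b i 0)
    have : 0 < (esymmVec n (j + 1) b + c * S0) * esymmVec n (j + 2) b := by
      nlinarith [mul_pos p1 hp, mul_le_mul_of_nonneg_left hsum (neg_nonneg.2 hc)]
    exact (pos_iff_pos_of_mul_pos this).2 p2
  intro j hj1 hjk
  have : ∀ m, m + 1 ≤ k → 0 < matSk n (k - m) (Matrix.diagonal b + c • Matrix.vecMulVec y y) := by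
    intro m
    induction m with
    | zero => intro _; exact h
    | succ m ih =>
      intro hm
      have := ih (by omega)
      have e : k - m = (k - (m + 2)) + 2 := by omega
      rw [e] at this
      have e' : k - (m + 1) = (k - (m + 2)) + 1 := by omega
      rw [e']
      exact step _ (by omega) this
  have := this (k - j) (by omega)
  rwa [show k - (k - j) = j by omega] at this

lemma hs_apply (n : ℕ) (f : Euc n → ℝ) (x : Euc n) (i j : Fin n) :
    hessMat n f x i j = fderiv ℝ (fderiv ℝ f) x (ebasis n i) (ebasis n j) := by
  simp [hessMat, iteratedFDeriv_two_apply]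

lemma hs_symm (n : ℕ) (f : Euc n → ℝ) (x : Euc n) (hf : ContDiffAt ℝ 2 f x) :
    (hessMat n f x).IsSymm := by
  ext i j
  rw [Matrix.transpose_apply, hs_apply, hs_apply]
  exact hf.isSymmSndFDerivAt (by simp) _ _

lemma hs_sub (n : ℕ) (f g : Euc n → ℝ) (x : Euc n) (hf : ContDiffAt ℝ 2 f x)
    (hg : ContDiffAt ℝ 2 g x) : hessMat n (f - g) x = hessMat n f x - hessMat n g x := by
  ext i j
  simp only [hessMat, Matrix.of_apply, Matrix.sub_apply]
  rw [iteratedFDeriv_sub_apply (by exact_mod_cast hf) (by exact_mod_cast hg)]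
  rfl

lemma hs_affine (n : ℕ) (f : Euc n → ℝ) (x : Euc n) (hf : ContDiffAt ℝ 2 f x) (c d : ℝ) :
    hessMat n (fun y => c * f y + d) x = c • hessMat n f x := by
  ext i j
  simp only [Matrix.smul_apply, hs_apply]
  have h1 : fderiv ℝ (fun y => c * f y + d) =ᶠ[𝓝 x] fun y => c • fderiv ℝ f y := by
    have : ∀ᶠ y in 𝓝 x, ContDiffAt ℝ 2 f y := hf.eventually (by simp)
    filter_upwards [this] with y hy
    have hd : DifferentiableAt ℝ f y := hy.differentiableAt (by simp)
    exact ((hd.hasFDerivAt.const_mul c).add_const d).fderiv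
  rw [h1.fderiv_eq]
  have h2 : DifferentiableAt ℝ (fderiv ℝ f) x :=
    (hf.fderiv_right (m := 1) (by norm_num)).differentiableAt (by simp)
  rw [show (fun y => c • fderiv ℝ f y) = c • fderiv ℝ f from rfl,
    (h2.hasFDerivAt.const_smul c).fderiv]
  rfl

lemma hs_second (n : ℕ) (f : Euc n → ℝ) (x v : Euc n) (hf : ContDiffAt ℝ 2 f x)
    (hmin : IsLocalMin f x) : 0 ≤ fderiv ℝ (fderiv ℝ f) x v v := by
  by_contra hneg
  push Not at hneg
  set g : ℝ → ℝ := fun t => f (x + t • v) with hg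
  have hline : ∀ t : ℝ, HasDerivAt (fun t : ℝ => x + t • v) v t := by
    intro t
    simpa using ((hasDerivAt_id t).smul_const v).const_add x
  have hcont : Tendsto (fun t : ℝ => x + t • v) (𝓝 0) (𝓝 x) := by
    have := (hline 0).continuousAt.tendsto
    simpa using this
  have hd : deriv g =ᶠ[𝓝 0] fun t => fderiv ℝ f (x + t • v) v := by
    have : ∀ᶠ y in 𝓝 x, ContDiffAt ℝ 2 f y := hf.eventually (by simp)
    filter_upwards [hcont.eventually this] with t ht
    have hd : DifferentiableAt ℝ f (x + t • v) := ht.differentiableAt (by simp)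
    exact (hd.hasFDerivAt.comp_hasDerivAt t (hline t)).deriv
  have h2 : DifferentiableAt ℝ (fderiv ℝ f) x :=
    (hf.fderiv_right (m := 1) (by norm_num)).differentiableAt (by simp)
  have hdd : deriv (deriv g) 0 = fderiv ℝ (fderiv ℝ f) x v v := by
    rw [hd.deriv_eq]
    have h3 : HasFDerivAt (fderiv ℝ f) (fderiv ℝ (fderiv ℝ f) x) (x + (0:ℝ) • v) := by
      simpa using h2.hasFDerivAt
    have h4 := h3.comp_hasDerivAt (0:ℝ) (hline 0)
    exact (h4.clm_apply (hasDerivAt_const (0:ℝ) v)).deriv.trans (by simp)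
  have hgmin : IsLocalMin g 0 := by
    have : ∀ᶠ t in 𝓝 (0:ℝ), f x ≤ f (x + t • v) := hcont.eventually hmin
    filter_upwards [this] with t ht
    simpa [hg] using ht
  have hd0 : deriv g 0 = 0 := hgmin.deriv_eq_zero
  have hgc : ContinuousAt g 0 := by
    have h3 : ContinuousAt f (x + (0:ℝ) • v) := by simpa using hf.continuousAt
    exact ContinuousAt.comp (f := fun t : ℝ => x + t • v) h3 (hline 0).continuousAt
  have hmax := isLocalMax_of_deriv_deriv_neg (by rw [hdd]; exact hneg) hd0 hgc
  have hconst : g =ᶠ[𝓝 0] fun _ => g 0 := by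
    filter_upwards [hgmin, hmax] with t h1 h2 using le_antisymm h2 h1
  have : deriv g =ᶠ[𝓝 0] fun _ => 0 := by
    have := hconst.eventuallyEq_nhds
    filter_upwards [this] with t ht
    rw [ht.deriv_eq]; simp
  rw [this.deriv_eq] at hdd
  simp at hdd
  linarith

lemma hs_psd (n : ℕ) (f : Euc n → ℝ) (x : Euc n) (hf : ContDiffAt ℝ 2 f x)
    (hmin : IsLocalMin f x) : (hessMat n f x).PosSemidef := by
  refine Matrix.PosSemidef.of_dotProduct_mulVec_nonneg ?_ ?_
  · rw [Matrix.IsHermitian, Matrix.conjTranspose_eq_transpose_of_trivial]; exact hs_symm n f x hf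
  · intro ξ
    have h := hs_second n f x (∑ i, ξ i • ebasis n i) hf hmin
    refine h.trans_eq ?_
    symm
    simp only [dotProduct, Matrix.mulVec, star_trivial, hs_apply, map_sum, map_smul,
      sum_apply, smul_apply, smul_eq_mul, Finset.mul_sum]
    rw [Finset.sum_comm]
    refine Finset.sum_congr rfl fun i _ => Finset.sum_congr rfl fun j _ => ?_
    ring

lemma gd_matSk_smul (n k : ℕ) (hk : k ≤ n) (M : Matrix (Fin n) (Fin n) ℝ) (c : ℝ) (hc : c ≠ 0) :
    matSk n k (c • M) = c ^ k * matSk n k M := by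
  have h : (c • M).charpoly.comp (Polynomial.C c * Polynomial.X) = Polynomial.C (c ^ n) * M.charpoly := by
    refine Polynomial.funext fun t => ?_
    simp only [Polynomial.eval_comp, Matrix.eval_charpoly, Polynomial.eval_mul, Polynomial.eval_C,
      Polynomial.eval_X]
    have : Matrix.scalar (Fin n) (c * t) - c • M = c • (Matrix.scalar (Fin n) t - M) := by
      ext i j
      simp only [Matrix.scalar_apply, Matrix.diagonal_apply, Matrix.sub_apply, Matrix.smul_apply,
        smul_eq_mul]
      split_ifs <;> ring
    rw [this, Matrix.det_smul]; simp
  have h2 := congrArg (fun p => p.coeff (n - k)) h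
  simp only [Polynomial.comp_C_mul_X_coeff, Polynomial.coeff_C_mul] at h2
  rw [matSk, matSk]
  have e : c ^ n = c ^ (n - k) * c ^ k := by rw [← pow_add]; congr 1; omega
  rw [e] at h2
  have hc' : c ^ (n - k) ≠ 0 := pow_ne_zero _ hc
  have h3 : (c • M).charpoly.coeff (n - k) = c ^ k * M.charpoly.coeff (n - k) := by
    apply mul_left_cancel₀ hc'
    linarith
  rw [h3]; ring

lemma cmp_strict (n k : ℕ) (hk1 : 1 ≤ k) (hk : k ≤ n) (D K : Set (Euc n)) (hD : IsOpen D)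
    (hDK : D ⊆ K) (hK : IsCompact K) (f g : Euc n → ℝ) (hfc : ContinuousOn f K)
    (hgc : ContinuousOn g K) (hf : ∀ x ∈ D, ContDiffAt ℝ 2 f x) (hg : ∀ x ∈ D, ContDiffAt ℝ 2 g x)
    (hG : ∀ x ∈ D, GCone n k (hessMat n f x))
    (hlt : ∀ x ∈ D, matSk n k (hessMat n g x) < matSk n k (hessMat n f x))
    (hb : ∀ x ∈ K \ D, f x ≤ g x) : ∀ x ∈ K, f x ≤ g x := by
  intro x hx
  obtain ⟨z, hz, hmin⟩ := hK.exists_isMinOn ⟨x, hx⟩ (hgc.sub hfc)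
  have hzx : g z - f z ≤ g x - f x := hmin hx
  by_cases hzD : z ∈ D
  · exfalso
    have hloc : IsLocalMin (g - f) z := by
      filter_upwards [hD.mem_nhds hzD] with y hy using hmin (hDK hy)
    have hp := hs_psd n (g - f) z ((hg z hzD).sub (hf z hzD)) hloc
    rw [hs_sub n g f z (hg z hzD) (hf z hzD)] at hp
    have := gd_mono n k hk1 hk _ _ (hs_symm n f z (hf z hzD)) (hG z hzD) hp
    rw [add_sub_cancel] at this
    exact absurd (hlt z hzD) (not_lt.2 this)
  · have := hb z ⟨hz, hzD⟩
    linarith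

lemma cmpr (n k : ℕ) (hk1 : 1 ≤ k) (hk : k ≤ n) (D K : Set (Euc n)) (hD : IsOpen D)
    (hDK : D ⊆ K) (hK : IsCompact K) (f g : Euc n → ℝ) (hfc : ContinuousOn f K)
    (hgc : ContinuousOn g K) (hf : ∀ x ∈ D, ContDiffAt ℝ 2 f x) (hg : ∀ x ∈ D, ContDiffAt ℝ 2 g x)
    (hG : ∀ x ∈ D, GCone n k (hessMat n f x))
    (hf1 : ∀ x ∈ D, 1 ≤ matSk n k (hessMat n f x)) (hg1 : ∀ x ∈ D, matSk n k (hessMat n g x) ≤ 1)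
    (hb : ∀ x ∈ K \ D, f x ≤ g x) : ∀ x ∈ K, f x ≤ g x := by
  intro x hx
  obtain ⟨m, hm⟩ := (hK.image_of_continuousOn hfc).bddAbove
  have hm' : ∀ y ∈ K, f y ≤ m := fun y hy => hm ⟨y, hy, rfl⟩
  have key : ∀ δ : ℝ, 0 < δ → (1 + δ) * f x + (- δ * m) ≤ g x := by
    intro δ hδ
    refine cmp_strict n k hk1 hk D K hD hDK hK (fun y => (1 + δ) * f y + (- δ * m)) g
      ((continuousOn_const.mul hfc).add continuousOn_const) hgc
      (fun y hy => (contDiffAt_const.mul (hf y hy)).add contDiffAt_const) hg ?_ ?_ ?_ x hx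
    · intro y hy j h1 h2
      rw [hs_affine n f y (hf y hy), gd_matSk_smul n j (h2.trans hk) _ _ (by positivity)]
      exact mul_pos (by positivity) (hG y hy j h1 h2)
    · intro y hy
      rw [hs_affine n f y (hf y hy), gd_matSk_smul n k hk _ _ (by positivity)]
      have h1 : 1 < (1 + δ) ^ k := one_lt_pow₀ (by linarith) (by omega)
      have := hf1 y hy
      have := hg1 y hy
      nlinarith
    · intro y hy
      have h1 := hb y hy
      have h2 := hm' y hy.1
      nlinarith
  have hlim : Tendsto (fun δ : ℝ => (1 + δ) * f x + (- δ * m)) (𝓝[>] 0) (𝓝 (f x)) := by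
    have : Continuous (fun δ : ℝ => (1 + δ) * f x + (- δ * m)) := by fun_prop
    have h := this.tendsto 0
    simp only [add_zero, one_mul, neg_zero, zero_mul] at h
    exact h.mono_left nhdsWithin_le_nhds
  exact le_of_tendsto hlim (eventually_mem_nhdsWithin.mono fun δ hδ => key δ hδ)

/-- The bilinear form `Σ a_i v_i w_i`. -/
noncomputable def bform (n : ℕ) (a : Fin n → ℝ) : Euc n →L[ℝ] Euc n →L[ℝ] ℝ :=
  ∑ i, a i • (EuclideanSpace.proj i : Euc n →L[ℝ] ℝ).smulRight
    (EuclideanSpace.proj i : Euc n →L[ℝ] ℝ)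

lemma bform_apply (n : ℕ) (a : Fin n → ℝ) (v w : Euc n) : bform n a v w = ∑ i, a i * v i * w i := by
  simp [bform, sum_apply, mul_assoc]

/-- Quadratic function with centre `z`. -/
noncomputable def qf (n : ℕ) (a : Fin n → ℝ) (z x : Euc n) : ℝ := quadA n (Matrix.diagonal a) (x - z)

lemma quad_diag (n : ℕ) (a : Fin n → ℝ) (x : Euc n) :
    quadA n (Matrix.diagonal a) x = (1 / 2) * ∑ i, a i * x i ^ 2 := by
  rw [quadA]
  congr 1
  refine Finset.sum_congr rfl fun i _ => ?_
  rw [Finset.sum_eq_single i]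
  · simp; ring
  · intro j _ hj; simp [Matrix.diagonal_apply_ne' _ hj]
  · simp

lemma qf_eq (n : ℕ) (a : Fin n → ℝ) (z x : Euc n) :
    qf n a z x = (1 / 2) * bform n a (x - z) (x - z) := by
  rw [qf, quad_diag, bform_apply]
  congr 1
  exact Finset.sum_congr rfl fun i _ => by ring

lemma bform_symm (n : ℕ) (a : Fin n → ℝ) (v w : Euc n) : bform n a v w = bform n a w v := by
  rw [bform_apply, bform_apply]
  exact Finset.sum_congr rfl fun i _ => by ring

lemma qf_hasFDerivAt (n : ℕ) (a : Fin n → ℝ) (z x : Euc n) :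
    HasFDerivAt (qf n a z) (bform n a (x - z)) x := by
  have h1 : HasFDerivAt (fun y : Euc n => y - z) (ContinuousLinearMap.id ℝ (Euc n)) x :=
    (hasFDerivAt_id x).sub_const z
  have h2 : HasFDerivAt (fun y : Euc n => bform n a (y - z)) (bform n a) x :=
    (bform n a).hasFDerivAt.comp x h1
  have h3 := (h2.clm_apply h1).const_mul (1 / 2 : ℝ)
  have e : qf n a z = fun y => (1 / 2 : ℝ) * bform n a (y - z) (y - z) := by
    funext y; exact qf_eq n a z y
  rw [e]
  refine h3.congr_fderiv ?_
  refine ContinuousLinearMap.ext fun v => ?_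
  have hs := bform_symm n a v (x - z)
  change (1 / 2) * (bform n a (x - z) v + bform n a v (x - z)) = bform n a (x - z) v
  rw [hs]; ring

lemma qf_contDiff (n : ℕ) (a : Fin n → ℝ) (z : Euc n) : ContDiff ℝ 2 (qf n a z) := by
  have e : qf n a z = fun y => (1 / 2 : ℝ) * bform n a (y - z) (y - z) := by
    funext y; exact qf_eq n a z y
  rw [e]
  have h1 : ContDiff ℝ 2 (fun y : Euc n => y - z) := contDiff_id.sub contDiff_const
  exact contDiff_const.mul (((bform n a).contDiff.comp h1).clm_apply h1)

lemma barrier_contDiffAt (n : ℕ) (a : Fin n → ℝ) (z x : Euc n) (φ : ℝ → ℝ)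
    (hφ : ContDiffAt ℝ 2 φ (qf n a z x)) : ContDiffAt ℝ 2 (fun y => φ (qf n a z y)) x :=
  ContDiffAt.comp x hφ (qf_contDiff n a z).contDiffAt

lemma barrier_hess (n : ℕ) (a : Fin n → ℝ) (z x : Euc n) (φ : ℝ → ℝ)
    (hφ : ContDiffAt ℝ 2 φ (qf n a z x)) :
    hessMat n (fun y => φ (qf n a z y)) x =
      Matrix.diagonal (fun i => deriv φ (qf n a z x) * a i)
        + (deriv (deriv φ) (qf n a z x)) • Matrix.vecMulVec (fun i => a i * (x - z) i)
          (fun i => a i * (x - z) i) := by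
  have h1 : fderiv ℝ (fun y => φ (qf n a z y)) =ᶠ[𝓝 x]
      fun y => deriv φ (qf n a z y) • bform n a (y - z) := by
    have he : ∀ᶠ t in 𝓝 (qf n a z x), ContDiffAt ℝ 2 φ t := hφ.eventually (by simp)
    filter_upwards [(qf_hasFDerivAt n a z x).continuousAt.eventually he] with y hy
    exact ((hy.differentiableAt (by simp)).hasDerivAt.comp_hasFDerivAt y
      (qf_hasFDerivAt n a z y)).fderiv
  have h2 : HasFDerivAt (fun y : Euc n => bform n a (y - z)) (bform n a) x :=
    (bform n a).hasFDerivAt.comp x ((hasFDerivAt_id x).sub_const z)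
  have hdd : DifferentiableAt ℝ (deriv φ) (qf n a z x) := by
    have h := (hφ.fderiv_right (m := 1) (by norm_num)).differentiableAt (by simp)
    have e : deriv φ = fun t => fderiv ℝ φ t 1 := by funext t; simp
    rw [e]
    exact h.clm_apply (differentiableAt_const _)
  have h3 := hdd.hasDerivAt.comp_hasFDerivAt x (qf_hasFDerivAt n a z x)
  have h4 := h3.smul h2
  have h5 : fderiv ℝ (fderiv ℝ (fun y => φ (qf n a z y))) x = _ := h1.fderiv_eq.trans h4.fderiv
  ext i j
  rw [hs_apply, h5]
  have hb1 : ∀ v : Euc n, ∀ i, bform n a v (ebasis n i) = a i * v i := by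
    intro v i
    rw [bform_apply, Finset.sum_eq_single i]
    · simp [ebasis]
    · intro l _ hl; simp [ebasis, hl]
    · simp
  have hb2 : bform n a (ebasis n i) (ebasis n j) = if i = j then a i else 0 := by
    rw [hb1]; simp only [ebasis, PiLp.single_apply]
    split_ifs with h1 h2 h2
    · subst h1; simp
    · exact absurd h1.symm h2
    · exact absurd h2.symm h1
    · simp
  simp only [add_apply, smul_apply, ContinuousLinearMap.smulRight_apply, smul_eq_mul, hb2, hb1 (x - z),
    Matrix.add_apply, Matrix.smul_apply, Matrix.diagonal_apply, Matrix.vecMulVec_apply,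
    Function.comp_apply]
  split_ifs with hij
  · subst hij; ring
  · ring

lemma half_space {E : Type*} [NormedAddCommGroup E] [NormedSpace ℝ E] (f l : E →L[ℝ] ℝ) (hl : l ≠ 0)
    (h : ∀ v, 0 < l v → 0 ≤ f v) : ∃ c : ℝ, 0 ≤ c ∧ f = c • l := by
  obtain ⟨v0, hv0⟩ : ∃ v, l v ≠ 0 := by
    by_contra hc; push Not at hc; exact hl (by ext v; simpa using hc v)
  set w := (l v0)⁻¹ • v0 with hw
  have hlw : l w = 1 := by simp [hw, hv0]
  refine ⟨f w, h w (by rw [hlw]; norm_num), ?_⟩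
  ext v
  have key : ∀ t : ℝ, 0 ≤ f w + t * f (v - l v • w) := by
    intro t
    have := h (w + t • (v - l v • w)) (by simp [hlw])
    simpa using this
  have h0 : f (v - l v • w) = 0 := by
    by_contra hne
    have := key (-(f w + 1) / f (v - l v • w))
    rw [div_mul_cancel₀ _ hne] at this
    linarith
  have : f v - l v * f w = 0 := by simpa using h0
  simp; linarith

/-- first-order condition at a boundary point. -/
lemma bdry_first {n : ℕ} (f g : Euc n → ℝ) (x : Euc n) (f' g' : Euc n →L[ℝ] ℝ)
    (hf : HasFDerivAt f f' x) (hg : HasFDerivAt g g' x) (hg0 : g' ≠ 0)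
    (h : ∀ᶠ y in 𝓝 x, g x < g y → f x ≤ f y) : ∃ c : ℝ, 0 ≤ c ∧ f' = c • g' := by
  refine half_space f' g' hg0 fun v hv => ?_
  have hline : HasDerivAt (fun t : ℝ => x + t • v) v 0 := by
    simpa using ((hasDerivAt_id (0:ℝ)).smul_const v).const_add x
  have hcont : Tendsto (fun t : ℝ => x + t • v) (𝓝 0) (𝓝 x) := by
    simpa using hline.continuousAt.tendsto
  have hf1 : HasDerivAt (fun t : ℝ => f (x + t • v)) (f' v) 0 := by
    have : HasFDerivAt f f' (x + (0:ℝ) • v) := by simpa using hf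
    exact this.comp_hasDerivAt 0 hline
  have hg1 : HasDerivAt (fun t : ℝ => g (x + t • v)) (g' v) 0 := by
    have : HasFDerivAt g g' (x + (0:ℝ) • v) := by simpa using hg
    exact this.comp_hasDerivAt 0 hline
  have hfs := hf1.tendsto_slope_zero_right
  have hgs := hg1.tendsto_slope_zero_right
  refine ge_of_tendsto hfs ?_
  filter_upwards [hgs.eventually (lt_mem_nhds hv), (hcont.eventually h).filter_mono nhdsWithin_le_nhds,
    self_mem_nhdsWithin] with t h1 h2 h3
  have h3' : (0:ℝ) < t := h3
  simp only [zero_add, zero_smul, add_zero, smul_eq_mul] at h1 ⊢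
  have hgt : g x < g (x + t • v) := by
    have := (pos_iff_pos_of_mul_pos h1).1 (by positivity); linarith
  have := h2 hgt
  exact mul_nonneg (by positivity) (by linarith)

lemma esymm_smul (n j : ℕ) (c : ℝ) (a : Fin n → ℝ) :
    esymmVec n j (fun i => c * a i) = c ^ j * esymmVec n j a := by
  rw [esymmVec, esymmVec, Finset.mul_sum]
  refine Finset.sum_congr rfl fun s hs => ?_
  rw [Finset.prod_mul_distrib, Finset.prod_const, (Finset.mem_powersetCard.1 hs).2]

lemma esymm_smul_upd (n j : ℕ) (c : ℝ) (a : Fin n → ℝ) (i : Fin n) :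
    esymmVec n j (Function.update (fun i => c * a i) i 0)
      = c ^ j * esymmVec n j (Function.update a i 0) := by
  rw [← esymm_smul]
  congr 1
  funext l
  by_cases hl : l = i
  · subst hl; simp
  · simp [hl]

lemma esymm_pos (n j : ℕ) (hj : j ≤ n) (a : Fin n → ℝ) (ha : ∀ i, 0 < a i) : 0 < esymmVec n j a := by
  refine Finset.sum_pos (fun s _ => Finset.prod_pos fun i _ => ha i) ?_
  exact Finset.powersetCard_nonempty.2 (by simpa using hj)

lemma esymm_upd_nonneg (n j : ℕ) (a : Fin n → ℝ) (ha : ∀ i, 0 < a i) (i : Fin n) :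
    0 ≤ esymmVec n j (Function.update a i 0) := by
  refine Finset.sum_nonneg fun s _ => Finset.prod_nonneg fun l _ => ?_
  by_cases hl : l = i
  · subst hl; simp
  · rw [Function.update_of_ne hl]; exact (ha l).le

lemma barrier_Sk (n m : ℕ) (hm : m + 1 ≤ n) (a : Fin n → ℝ) (z x : Euc n) (φ : ℝ → ℝ)
    (hφ : ContDiffAt ℝ 2 φ (qf n a z x)) :
    matSk n (m + 1) (hessMat n (fun y => φ (qf n a z y)) x) =
      deriv φ (qf n a z x) ^ (m + 1) * esymmVec n (m + 1) a +
      deriv φ (qf n a z x) ^ m * deriv (deriv φ) (qf n a z x) *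
        ∑ i, (a i * (x - z) i) ^ 2 * esymmVec n m (Function.update a i 0) := by
  rw [barrier_hess n a z x φ hφ, nw_matSk_rank_one n m hm, esymm_smul]
  simp only [esymm_smul_upd]
  congr 1
  rw [Finset.mul_sum, Finset.mul_sum]
  exact Finset.sum_congr rfl fun i _ => by ring

lemma barrier_cone (n k : ℕ) (hk : k ≤ n) (a : Fin n → ℝ) (ha : ∀ i, 0 < a i) (z x : Euc n) (φ : ℝ → ℝ)
    (hφ : ContDiffAt ℝ 2 φ (qf n a z x)) (h1 : 0 < deriv φ (qf n a z x))
    (h2 : deriv (deriv φ) (qf n a z x) ≤ 0)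
    (h : 1 ≤ matSk n k (hessMat n (fun y => φ (qf n a z y)) x)) :
    GCone n k (hessMat n (fun y => φ (qf n a z y)) x) := by
  rw [barrier_hess n a z x φ hφ] at h ⊢
  exact gd_lower n k hk _ _ (fun i => mul_pos h1 (ha i)) _ h2 (by linarith)

lemma lin_contDiff (m d t : ℝ) : ContDiffAt ℝ 2 (fun t : ℝ => m * t + d) t :=
  (contDiffAt_const.mul contDiffAt_id).add contDiffAt_const

lemma lin_deriv (m d : ℝ) : deriv (fun t : ℝ => m * t + d) = fun _ => m := by
  funext t
  simpa using (((hasDerivAt_id t).const_mul m).add_const d).deriv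

lemma lin_Sk (n j : ℕ) (hj1 : 1 ≤ j) (hj : j ≤ n) (a : Fin n → ℝ) (z x : Euc n) (m d : ℝ) :
    matSk n j (hessMat n (fun y => m * qf n a z y + d) x) = m ^ j * esymmVec n j a := by
  obtain ⟨l, rfl⟩ : ∃ l, j = l + 1 := ⟨j - 1, by omega⟩
  have := barrier_Sk n l hj a z x (fun t => m * t + d) (lin_contDiff m d _)
  rw [this, lin_deriv]; simp

lemma lin_cont (n : ℕ) (a : Fin n → ℝ) (z : Euc n) (m d : ℝ) :
    Continuous (fun y => m * qf n a z y + d) :=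
  (continuous_const.mul (qf_contDiff n a z).continuous).add continuous_const

lemma lin_cd (n : ℕ) (a : Fin n → ℝ) (z x : Euc n) (m d : ℝ) :
    ContDiffAt ℝ 2 (fun y => m * qf n a z y + d) x :=
  barrier_contDiffAt n a z x (fun t => m * t + d) (lin_contDiff m d _)

/-- primitive -/
lemma prim_hasDerivAt (g : ℝ → ℝ) (hg : ContDiffOn ℝ 1 g (Set.Ioi 0)) (c t : ℝ) (hc : 0 < c) (ht : 0 < t) :
    HasDerivAt (fun t => ∫ s in c..t, g s) (g t) t := by
  have hcont := hg.continuousOn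
  refine intervalIntegral.integral_hasDerivAt_right ?_ ?_ (hcont.continuousAt (Ioi_mem_nhds ht))
  · refine (hcont.mono ?_).intervalIntegrable
    intro y hy
    rw [Set.mem_uIcc] at hy
    rcases hy with hy | hy
    · exact hc.trans_le hy.1
    · exact ht.trans_le hy.1
  · exact hcont.stronglyMeasurableAtFilter isOpen_Ioi t ht

lemma prim_deriv (g : ℝ → ℝ) (hg : ContDiffOn ℝ 1 g (Set.Ioi 0)) (c t : ℝ) (hc : 0 < c) (ht : 0 < t) :
    deriv (fun t => ∫ s in c..t, g s) t = g t := (prim_hasDerivAt g hg c t hc ht).deriv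

lemma prim_deriv2 (g : ℝ → ℝ) (hg : ContDiffOn ℝ 1 g (Set.Ioi 0)) (c t : ℝ) (hc : 0 < c) (ht : 0 < t) :
    deriv (deriv (fun t => ∫ s in c..t, g s)) t = deriv g t := by
  refine Filter.EventuallyEq.deriv_eq ?_
  filter_upwards [Ioi_mem_nhds ht] with y hy using prim_deriv g hg c y hc hy

lemma prim_contDiffAt (g : ℝ → ℝ) (hg : ContDiffOn ℝ 1 g (Set.Ioi 0)) (c t : ℝ) (hc : 0 < c) (ht : 0 < t) :
    ContDiffAt ℝ 2 (fun t => ∫ s in c..t, g s) t := by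
  have : ContDiffOn ℝ (1 + 1) (fun t => ∫ s in c..t, g s) (Set.Ioi 0) := by
    rw [contDiffOn_succ_iff_deriv_of_isOpen isOpen_Ioi]
    refine ⟨fun y hy => (prim_hasDerivAt g hg c y hc hy).differentiableAt.differentiableWithinAt,
      by simp, hg.congr fun y hy => prim_deriv g hg c y hc hy⟩
  have h := this.contDiffAt (Ioi_mem_nhds ht)
  rwa [show (1 + 1 : WithTop ℕ∞) = 2 by norm_num] at h

/-- h_k facts -/
lemma hk_term_le (n k : ℕ) (a : Fin n → ℝ) (i : Fin n) :
    esymmVec n (k - 1) (Function.update a i 0) * a i ≤ hkfun n k a :=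
  le_ciSup (f := fun i : Fin n => esymmVec n (k - 1) (Function.update a i 0) * a i)
    (Set.finite_range _).bddAbove i

lemma hk_attained (n k : ℕ) (hn : 0 < n) (a : Fin n → ℝ) :
    ∃ i, hkfun n k a = esymmVec n (k - 1) (Function.update a i 0) * a i := by
  haveI : Nonempty (Fin n) := ⟨⟨0, hn⟩⟩
  obtain ⟨i, hi⟩ := Finite.exists_max (fun i : Fin n => esymmVec n (k - 1) (Function.update a i 0) * a i)
  exact ⟨i, le_antisymm (ciSup_le hi) (hk_term_le n k a i)⟩

lemma hk_lt (n k : ℕ) (hn : 3 ≤ n) (hk1 : 1 ≤ k) (hkn : k ≤ n) (a : Fin n → ℝ) (ha : ∀ i, 0 < a i)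
    (h1 : esymmVec n k a = 1) (hk1' : k = 1 → (⨆ i, a i) < 1 / 2) : 2 * hkfun n k a < k := by
  obtain ⟨i, hi⟩ := hk_attained n k (by omega) a
  obtain ⟨m, rfl⟩ : ∃ m, k = m + 1 := ⟨k - 1, by omega⟩
  have hr := nw_esymm_rec n m a i
  rw [h1] at hr
  rw [hi, Nat.add_sub_cancel]
  have hnn := esymm_upd_nonneg n (m + 1) a ha i
  rcases Nat.lt_or_ge m 2 with hm | hm
  · interval_cases m
    · have := hk1' rfl
      have h2 : a i ≤ ⨆ i, a i := le_ciSup (f := a) (Set.finite_range _).bddAbove i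
      rw [nw_esymm_zero]; push_cast; linarith
    · have hpos : 0 < esymmVec n (1 + 1) (Function.update a i 0) := by
        have hcard : 2 ≤ (Finset.univ.erase i).card := by
          rw [Finset.card_erase_of_mem (Finset.mem_univ i)]; simp; omega
        obtain ⟨s, hs1, hs2⟩ := Finset.exists_subset_card_eq hcard
        refine Finset.sum_pos' (fun s _ => Finset.prod_nonneg fun l _ => ?_) ⟨s, ?_, ?_⟩
        · by_cases hl : l = i
          · subst hl; simp
          · rw [Function.update_of_ne hl]; exact (ha l).le
        · exact Finset.mem_powersetCard.2 ⟨Finset.subset_univ _, hs2⟩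
        · refine Finset.prod_pos fun l hl => ?_
          rw [Function.update_of_ne (Finset.ne_of_mem_erase (hs1 hl))]; exact ha l
      push_cast; linarith
  · have : (2:ℝ) ≤ m := by exact_mod_cast hm
    push_cast; linarith

lemma hk_pos (n k : ℕ) (hn : 3 ≤ n) (hk1 : 1 ≤ k) (hkn : k ≤ n) (a : Fin n → ℝ) (ha : ∀ i, 0 < a i) :
    0 < hkfun n k a := by
  have i : Fin n := ⟨0, by omega⟩
  refine lt_of_lt_of_le ?_ (hk_term_le n k a i)
  refine mul_pos ?_ (ha i)
  obtain ⟨m, rfl⟩ : ∃ m, k = m + 1 := ⟨k - 1, by omega⟩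
  refine nw_garding n m a i fun j _ hj2 => ?_
  exact esymm_pos n j (by omega) a ha

lemma gi_base_pos (n k : ℕ) (a : Fin n → ℝ) (α t : ℝ) (hα : 0 < α) (ht : 0 < t) :
    0 < α * t ^ genExp n k a := mul_pos hα (rpow_pos_of_pos ht _)

lemma gi_one_le (n k : ℕ) (a : Fin n → ℝ) (α t : ℝ) (hα : 0 < α) (ht : 0 < t) :
    1 ≤ genInt n k a α t :=
  one_le_rpow (by linarith [gi_base_pos n k a α t hα ht]) (by positivity)

lemma gi_pow (n k : ℕ) (hk1 : 1 ≤ k) (a : Fin n → ℝ) (α t : ℝ) (hα : 0 < α) (ht : 0 < t) :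
    genInt n k a α t ^ k = 1 + α * t ^ genExp n k a := by
  have h := gi_base_pos n k a α t hα ht
  rw [genInt, one_div, rpow_inv_natCast_pow (by linarith) (by omega)]

lemma gi_contDiffOn (n k : ℕ) (a : Fin n → ℝ) (α : ℝ) (hα : 0 < α) :
    ContDiffOn ℝ 1 (genInt n k a α) (Set.Ioi 0) := by
  intro t ht
  have h := gi_base_pos n k a α t hα ht
  refine ContDiffAt.contDiffWithinAt ?_
  unfold genInt
  refine ContDiffAt.rpow_const_of_ne ?_ (by linarith)
  exact contDiffAt_const.add (contDiffAt_const.mul (ContDiffAt.rpow_const_of_ne contDiffAt_id (ne_of_gt ht)))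

lemma gi_anti (n k : ℕ) (a : Fin n → ℝ) (hE : genExp n k a ≤ 0) (α s t : ℝ) (hα : 0 < α) (hs : 0 < s)
    (hst : s ≤ t) : genInt n k a α t ≤ genInt n k a α s := by
  have h := gi_base_pos n k a α t hα (hs.trans_le hst)
  refine rpow_le_rpow (by linarith) ?_ (by positivity)
  have := rpow_le_rpow_of_nonpos hs hst hE
  have := mul_le_mul_of_nonneg_left this hα.le
  linarith

lemma gi_deriv (n k : ℕ) (hk1 : 1 ≤ k) (a : Fin n → ℝ) (α t : ℝ) (hα : 0 < α) (ht : 0 < t) :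
    k * genInt n k a α t ^ (k - 1) * deriv (genInt n k a α) t
      = α * (genExp n k a * t ^ (genExp n k a - 1)) := by
  have hd : DifferentiableAt ℝ (genInt n k a α) t :=
    ((gi_contDiffOn n k a α hα).contDiffAt (Ioi_mem_nhds ht)).differentiableAt (by norm_num)
  have h1 := hd.hasDerivAt.pow k
  have h2 : HasDerivAt (fun t : ℝ => 1 + α * t ^ genExp n k a)
      (α * (genExp n k a * t ^ (genExp n k a - 1))) t :=
    ((hasDerivAt_rpow_const (Or.inl ht.ne')).const_mul α).const_add 1
  have h3 : (genInt n k a α ^ k) =ᶠ[𝓝 t] (fun t : ℝ => 1 + α * t ^ genExp n k a) := by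
    filter_upwards [Ioi_mem_nhds ht] with y hy
    exact gi_pow n k hk1 a α y hα hy
  exact (h2.congr_of_eventuallyEq h3).unique h1 |>.symm

lemma genExp_lt (n k : ℕ) (a : Fin n → ℝ) (hpos : 0 < hkfun n k a) (hlt : 2 * hkfun n k a < k) :
    genExp n k a < -1 := by
  rw [genExp, div_lt_iff₀ (by positivity)]; linarith

lemma ubar_eq (n k : ℕ) (a : Fin n → ℝ) (R₀ α : ℝ) :
    ubar n k a R₀ α = fun y => (fun t => ∫ s in R₀..t, genInt n k a α s) (qf n a 0 y) := by
  funext y; simp [ubar, qf]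

lemma ubar_barrier (n k : ℕ) (hn : 3 ≤ n) (hk1 : 1 ≤ k) (hkn : k ≤ n) (a : Fin n → ℝ) (ha : ∀ i, 0 < a i)
    (h1 : esymmVec n k a = 1) (R₀ α : ℝ) (hR₀ : 0 < R₀) (hα : 0 < α) (x : Euc n)
    (hx : 0 < qf n a 0 x) :
    ContDiffAt ℝ 2 (ubar n k a R₀ α) x ∧ 1 ≤ matSk n k (hessMat n (ubar n k a R₀ α) x) ∧
      GCone n k (hessMat n (ubar n k a R₀ α) x) := by
  have hpos := hk_pos n k hn hk1 hkn a ha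
  set g := genInt n k a α with hg
  have hgc := gi_contDiffOn n k a α hα
  have hφ := prim_contDiffAt g hgc R₀ _ hR₀ hx
  have hd1 := prim_deriv g hgc R₀ _ hR₀ hx
  have hd2 := prim_deriv2 g hgc R₀ _ hR₀ hx
  have hg1 := gi_one_le n k a α _ hα hx
  have hgd := gi_deriv n k hk1 a α _ hα hx
  have hgp := gi_pow n k hk1 a α _ hα hx
  rw [← hg] at hg1 hgd hgp
  set t := qf n a 0 x with ht
  have hE : genExp n k a * (2 * hkfun n k a) = -k := by
    rw [genExp]; field_simp
  have hneg : genExp n k a < 0 := by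
    rw [genExp]; apply div_neg_of_neg_of_pos
    · have : (0:ℝ) < k := by exact_mod_cast hk1
      linarith
    · positivity
  have hk0 : (0:ℝ) < k := by exact_mod_cast hk1
  have hgk : 0 < g t ^ (k - 1) := pow_pos (by linarith) _
  have hd2n : deriv g t ≤ 0 := by
    by_contra hc
    push Not at hc
    have : 0 < k * g t ^ (k - 1) * deriv g t := by positivity
    rw [hgd] at this
    have : α * (genExp n k a * t ^ (genExp n k a - 1)) < 0 :=
      mul_neg_of_pos_of_neg hα (mul_neg_of_neg_of_pos hneg (rpow_pos_of_pos hx _))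
    linarith
  have hSk : 1 ≤ matSk n k (hessMat n (ubar n k a R₀ α) x) := by
    obtain ⟨m, rfl⟩ : ∃ m, k = m + 1 := ⟨k - 1, by omega⟩
    rw [ubar_eq, barrier_Sk n m hkn a 0 x _ hφ, ← ht, hd1, hd2, h1, hgp]
    rw [Nat.add_sub_cancel] at hgd hgk
    have hsum : ∑ i, (a i * (x - 0) i) ^ 2 * esymmVec n m (Function.update a i 0)
        ≤ 2 * hkfun n (m + 1) a * t := by
      rw [ht, qf, quad_diag, ← mul_assoc, show 2 * hkfun n (m+1) a * (1/2) = hkfun n (m+1) a by ring,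
        Finset.mul_sum]
      refine Finset.sum_le_sum fun i _ => ?_
      have h4 := hk_term_le n (m + 1) a i
      rw [Nat.add_sub_cancel] at h4
      have : 0 ≤ a i * (x - 0) i ^ 2 := mul_nonneg (ha i).le (sq_nonneg _)
      nlinarith [mul_le_mul_of_nonneg_right h4 this]
    have h5 : g t ^ m * deriv g t * (2 * hkfun n (m + 1) a * t) ≤
        g t ^ m * deriv g t * ∑ i, (a i * (x - 0) i) ^ 2 * esymmVec n m (Function.update a i 0) :=
      mul_le_mul_of_nonpos_left hsum (mul_nonpos_of_nonneg_of_nonpos hgk.le hd2n)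
    have h6 : g t ^ m * deriv g t * (2 * hkfun n (m + 1) a * t) = - (α * t ^ genExp n (m+1) a) := by
      have e : t ^ (genExp n (m+1) a - 1) * t = t ^ genExp n (m+1) a := by
        rw [rpow_sub_one hx.ne']; field_simp
      have : ((m+1 : ℕ):ℝ) * (g t ^ m * deriv g t * (2 * hkfun n (m + 1) a * t))
          = ((m+1 : ℕ):ℝ) * (- (α * t ^ genExp n (m+1) a)) := by
        calc _ = (((m+1 : ℕ):ℝ) * g t ^ m * deriv g t) * (2 * hkfun n (m + 1) a * t) := by ring
          _ = α * (genExp n (m+1) a * (2 * hkfun n (m + 1) a)) * (t ^ (genExp n (m+1) a - 1) * t) := by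
              rw [hgd]; ring
          _ = _ := by rw [hE, e]; ring
      exact mul_left_cancel₀ hk0.ne' this
    linarith
  refine ⟨?_, hSk, ?_⟩
  · rw [ubar_eq]; exact barrier_contDiffAt n a 0 x _ hφ
  · rw [ubar_eq] at hSk ⊢
    have hq1 : 0 < deriv (fun t => ∫ s in R₀..t, g s) (qf n a 0 x) := by rw [← ht, hd1]; linarith
    have hq2 : deriv (deriv (fun t => ∫ s in R₀..t, g s)) (qf n a 0 x) ≤ 0 := by rw [← ht, hd2]; exact hd2n
    exact barrier_cone n k hkn a ha 0 x (fun t => ∫ s in R₀..t, g s) hφ hq1 hq2 hSk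

/-- integral estimates -/
lemma gi_intervalIntegrable (n k : ℕ) (a : Fin n → ℝ) (α : ℝ) (hα : 0 < α) (c d : ℝ) (hc : 0 < c) (hd : 0 < d) :
    IntervalIntegrable (genInt n k a α) volume c d := by
  refine ((gi_contDiffOn n k a α hα).continuousOn.mono ?_).intervalIntegrable
  intro y hy
  rw [Set.mem_uIcc] at hy
  rcases hy with hy | hy
  · exact hc.trans_le hy.1
  · exact hd.trans_le hy.1

lemma gi_int_le (n k : ℕ) (a : Fin n → ℝ) (hE : genExp n k a ≤ 0) (α : ℝ) (hα : 0 < α) (c d : ℝ) (hc : 0 < c)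
    (hcd : c ≤ d) : ∫ t in c..d, genInt n k a α t ≤ genInt n k a α c * (d - c) := by
  have := intervalIntegral.integral_mono_on hcd (gi_intervalIntegrable n k a α hα c d hc (hc.trans_le hcd))
    (_root_.intervalIntegrable_const (c := genInt n k a α c)) (fun t ht => gi_anti n k a hE α c t hα hc ht.1)
  rw [intervalIntegral.integral_const, smul_eq_mul] at this
  linarith

lemma gi_le_int (n k : ℕ) (a : Fin n → ℝ) (hE : genExp n k a ≤ 0) (α : ℝ) (hα : 0 < α) (c d : ℝ) (hc : 0 < c)
    (hcd : c ≤ d) : genInt n k a α d * (d - c) ≤ ∫ t in c..d, genInt n k a α t := by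
  have := intervalIntegral.integral_mono_on hcd (_root_.intervalIntegrable_const (c := genInt n k a α d))
    (gi_intervalIntegrable n k a α hα c d hc (hc.trans_le hcd))
     (fun t ht => gi_anti n k a hE α t d hα (hc.trans_le ht.1) ht.2)
  rw [intervalIntegral.integral_const, smul_eq_mul] at this
  linarith

lemma gi_int_add (n k : ℕ) (a : Fin n → ℝ) (α : ℝ) (hα : 0 < α) (c d e : ℝ) (hc : 0 < c)
    (hd : 0 < d) (he : 0 < e) : ∫ t in c..e, genInt n k a α t
      = (∫ t in c..d, genInt n k a α t) + ∫ t in d..e, genInt n k a α t :=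
  (intervalIntegral.integral_add_adjacent_intervals (gi_intervalIntegrable n k a α hα c d hc hd)
    (gi_intervalIntegrable n k a α hα d e hd he)).symm

lemma gi_tail (n k : ℕ) (hk1 : 1 ≤ k) (a : Fin n → ℝ) (hE : genExp n k a < -1) (α : ℝ) (hα : 0 < α) (c d : ℝ) (hc : 0 < c)
    (hcd : c ≤ d) : ∫ t in c..d, genInt n k a α t
      ≤ d + α * (c ^ (genExp n k a + 1) / (- (genExp n k a + 1))) := by
  have hd := hc.trans_le hcd
  have h0 : (0:ℝ) ∉ Set.uIcc c d := by
    rw [Set.uIcc_of_le hcd]; intro h; linarith [h.1]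
  have hii : IntervalIntegrable (fun t : ℝ => t ^ genExp n k a) volume c d :=
    intervalIntegral.intervalIntegrable_rpow (Or.inr h0)
  have := intervalIntegral.integral_mono_on hcd (gi_intervalIntegrable n k a α hα c d hc hd)
    ((_root_.intervalIntegrable_const (c := (1:ℝ))).add (hii.const_mul α))
    (fun t ht => by
      have hb := gi_base_pos n k a α t hα (hc.trans_le ht.1)
      have : genInt n k a α t ≤ (1 + α * t ^ genExp n k a) ^ (1:ℝ) := by
        refine rpow_le_rpow_of_exponent_le (by linarith) ?_
        rw [div_le_one (by exact_mod_cast hk1)]; exact_mod_cast hk1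
      rw [rpow_one] at this
      exact this)
  refine this.trans ?_
  rw [intervalIntegral.integral_add _root_.intervalIntegrable_const (hii.const_mul α),
    intervalIntegral.integral_const_mul, integral_rpow (Or.inr ⟨by linarith, h0⟩)]
  simp only [intervalIntegral.integral_const, smul_eq_mul, mul_one]
  have h1 : 0 ≤ d ^ (genExp n k a + 1) := rpow_nonneg hd.le _
  have h2 : (d ^ (genExp n k a + 1) - c ^ (genExp n k a + 1)) / (genExp n k a + 1)
      ≤ c ^ (genExp n k a + 1) / (- (genExp n k a + 1)) := by
    rw [← neg_div_neg_eq]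
    gcongr
    · linarith
    · linarith
  have := mul_le_mul_of_nonneg_left h2 hα.le
  linarith

lemma esymm_ones (n j : ℕ) : esymmVec n j (fun _ => 1) = (n.choose j : ℝ) := by
  simp [esymmVec]

lemma esymm_ones_upd (n j : ℕ) (hn : 1 ≤ n) (i : Fin n) :
    esymmVec n j (Function.update (fun _ => 1) i 0) = ((n - 1).choose j : ℝ) := by
  induction j with
  | zero => rw [nw_esymm_zero]; simp
  | succ j ih =>
    have h := nw_esymm_rec n j (fun _ => 1) i
    rw [ih, esymm_ones, one_mul] at h
    obtain ⟨l, rfl⟩ : ∃ l, n = l + 1 := ⟨n - 1, by omega⟩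
    rw [Nat.add_sub_cancel] at h ⊢
    rw [Nat.choose_succ_succ] at h
    push_cast at h
    linarith

/-- radial profile -/
noncomputable def radg (n k : ℕ) (m s : ℝ) : ℝ := m * (2 * s) ^ (-(n:ℝ) / (2 * k))

lemma radg_hasDerivAt (n k : ℕ) (m s : ℝ) (hs : 0 < s) :
    HasDerivAt (radg n k m) (m * (2 * ((-(n:ℝ) / (2 * k)) * (2 * s) ^ (-(n:ℝ) / (2 * k) - 1)))) s := by
  have h1 : HasDerivAt (fun s : ℝ => 2 * s) 2 s := by simpa using (hasDerivAt_id s).const_mul 2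
  have := (h1.rpow_const (p := (-(n:ℝ) / (2 * k))) (Or.inl (by positivity))).const_mul m
  refine this.congr_deriv ?_
  ring

lemma radg_contDiffOn (n k : ℕ) (m : ℝ) : ContDiffOn ℝ 1 (radg n k m) (Set.Ioi 0) := by
  intro s hs
  refine ContDiffAt.contDiffWithinAt ?_
  have hs' : (0:ℝ) < s := hs
  exact contDiffAt_const.mul (ContDiffAt.rpow_const_of_ne (contDiffAt_const.mul contDiffAt_id)
    (by simp; exact hs'.ne'))

lemma radial_barrier (n k : ℕ) (hn : 3 ≤ n) (hk1 : 1 ≤ k) (hkn : k ≤ n) (m c : ℝ) (hc : 0 < c)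
    (x₀ x : Euc n) (hx : 0 < qf n (fun _ => 1) x₀ x) :
    ContDiffAt ℝ 2 (fun y => (fun t => ∫ s in c..t, radg n k m s) (qf n (fun _ => 1) x₀ y)) x ∧
    matSk n k (hessMat n (fun y => (fun t => ∫ s in c..t, radg n k m s) (qf n (fun _ => 1) x₀ y)) x) = 0 := by
  have hgc := radg_contDiffOn n k m
  have hφ := prim_contDiffAt _ hgc c _ hc hx
  refine ⟨barrier_contDiffAt n _ x₀ x _ hφ, ?_⟩
  obtain ⟨j, rfl⟩ : ∃ j, k = j + 1 := ⟨k - 1, by omega⟩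
  rw [barrier_Sk n j hkn _ x₀ x _ hφ, prim_deriv _ hgc c _ hc hx, prim_deriv2 _ hgc c _ hc hx,
    (radg_hasDerivAt n (j + 1) m _ hx).deriv]
  have hsum : ∑ i, (1 * (x - x₀) i) ^ 2 * esymmVec n j (Function.update (fun _ => 1) i 0)
      = 2 * qf n (fun _ => 1) x₀ x * ((n-1).choose j : ℝ) := by
    rw [qf, quad_diag, Finset.mul_sum, Finset.mul_sum, Finset.sum_mul]
    refine Finset.sum_congr rfl fun i _ => ?_
    rw [esymm_ones_upd n j (by omega)]; ring
  rw [hsum, esymm_ones]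
  set t := qf n (fun _ => 1) x₀ x with ht
  have hch : ((j + 1 : ℕ) : ℝ) * (n.choose (j+1) : ℝ) = n * ((n-1).choose j : ℝ) := by
    obtain ⟨l, rfl⟩ : ∃ l, n = l + 1 := ⟨n - 1, by omega⟩
    have := Nat.add_one_mul_choose_eq l j
    rw [Nat.add_sub_cancel]
    have h2 : ((l + 1 : ℕ) : ℝ) * (l.choose j : ℝ) = ((l+1).choose (j+1) : ℝ) * ((j + 1 : ℕ) : ℝ) := by
      exact_mod_cast this
    rw [h2]; ring
  have h2t : (0:ℝ) < 2 * t := by linarith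
  rw [rpow_sub_one h2t.ne']
  have hj : ((j + 1 : ℕ) : ℝ) ≠ 0 := by positivity
  have e : m * (2 * (-(n:ℝ) / (2 * ((j+1 : ℕ):ℝ)) * ((2 * t) ^ (-(n:ℝ) / (2 * ((j+1 : ℕ):ℝ))) / (2 * t))))
      * (2 * t * ((n-1).choose j : ℝ)) = - radg n (j+1) m t * (n.choose (j+1) : ℝ) := by
    have h3 : (n.choose (j+1) : ℝ) = n * ((n-1).choose j : ℝ) / ((j + 1 : ℕ) : ℝ) := by
      rw [← hch]; field_simp
    rw [h3, radg]
    field_simp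
  rw [mul_assoc, e]
  ring

lemma rad_integral (n k : ℕ) (m ε : ℝ) (hε : 0 < ε) (hε1 : ε < 1) :
    ∫ s in (ε ^ 2 / 2)..(1 / 2), radg n k m s
      = m * ((1 / 2) * ∫ s in (ε ^ 2)..1, s ^ (-(n:ℝ) / (2 * k))) := by
  unfold radg
  rw [intervalIntegral.integral_const_mul]
  rw [intervalIntegral.integral_comp_mul_left (fun s => s ^ (-(n:ℝ) / (2 * k))) (by norm_num : (2:ℝ) ≠ 0)]
  rw [show 2 * (ε ^ 2 / 2) = ε ^ 2 by ring, show (2:ℝ) * (1/2) = 1 by norm_num]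
  simp

lemma Ceps_mono (n k : ℕ) (hk1 : 1 ≤ k) (C C' ε : ℝ) (hε : 0 < ε) (h : C ≤ C') : Ceps n k C ε ≤ Ceps n k C' ε := by
  have hk0 : (0:ℝ) < k := by exact_mod_cast hk1
  unfold Ceps
  split_ifs with h1 h2
  · have : (0:ℝ) ≤ (n:ℝ) / k - 2 := by
      rw [sub_nonneg, le_div_iff₀ hk0]; exact_mod_cast h1.le
    gcongr
  · gcongr
  · have : (0:ℝ) ≤ 2 - (n:ℝ) / k := by
      rw [sub_nonneg, div_le_iff₀ hk0]
      have : n ≤ 2 * k := by omega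
      exact_mod_cast this
    have := rpow_nonneg hε.le (1 - (n:ℝ)/k)
    gcongr

lemma rad_const (n k : ℕ) (hk1 : 1 ≤ k) (Kc : ℝ) (hK : 0 < Kc) :
    ∃ C1 : ℝ, 0 < C1 ∧ ∀ ε : ℝ, 0 < ε → ε < 1 / 2 → ∃ m : ℝ, 0 < m ∧
      Kc ≤ ∫ s in (ε ^ 2 / 2)..(1 / 2), radg n k m s ∧
      radg n k m (ε ^ 2 / 2) * ε ≤ Ceps n k C1 ε := by
  have hk0 : (0:ℝ) < k := by exact_mod_cast hk1
  have hrad : ∀ m ε : ℝ, 0 < ε → radg n k m (ε ^ 2 / 2) * ε = m * ε ^ (1 - (n:ℝ) / k) := by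
    intro m ε hε
    rw [radg, show 2 * (ε ^ 2 / 2) = ε ^ (2:ℝ) by rw [rpow_two]; ring, ← rpow_mul hε.le, mul_assoc,
      ← rpow_add_one hε.ne']
    congr 2
    field_simp; ring
  have hsq : ∀ ε : ℝ, 0 < ε → ∀ y : ℝ, (ε ^ 2) ^ y = ε ^ (2 * y) := by
    intro ε hε y
    rw [← rpow_two, ← rpow_mul hε.le]
  have hnot : ∀ ε : ℝ, 0 < ε → ε < 1 / 2 → (0:ℝ) ∉ Set.uIcc (ε ^ 2) 1 := by
    intro ε hε hε2 h
    rw [Set.uIcc_of_le (by nlinarith)] at h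
    have := h.1
    have : 0 < ε ^ 2 := by positivity
    linarith
  rcases lt_trichotomy (2 * k) n with hlt | heq | hgt
  · set p : ℝ := (n:ℝ) / k - 2 with hp
    have hp0 : 0 < p := by
      rw [hp, sub_pos, lt_div_iff₀ hk0]; exact_mod_cast hlt
    have h2 : (0:ℝ) < 1 - (1/2 : ℝ) ^ p := by
      rw [sub_pos]; exact rpow_lt_one (by norm_num) (by norm_num) hp0
    refine ⟨Kc / (1 - (1/2 : ℝ) ^ p), by positivity, fun ε hε hε2 => ?_⟩
    have hεp : 0 < ε ^ p := rpow_pos_of_pos hε _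
    refine ⟨Kc * p * ε ^ p / (1 - (1/2 : ℝ) ^ p), by positivity, ?_, ?_⟩
    · rw [rad_integral n k _ ε hε (by linarith), integral_rpow (Or.inr ⟨?_, hnot ε hε hε2⟩), one_rpow,
        hsq ε hε]
      · have e1 : 2 * (-(n:ℝ) / (2 * k) + 1) = -p := by rw [hp]; field_simp; ring
        have e2 : -(n:ℝ) / (2 * k) + 1 = -p / 2 := by linarith
        rw [e1, e2, rpow_neg hε.le]
        have h3 : ε ^ p ≤ (1/2 : ℝ) ^ p := rpow_le_rpow hε.le hε2.le hp0.le
        have e3 : Kc * p * ε ^ p / (1 - (1/2 : ℝ) ^ p) * (1 / 2 * ((1 - (ε ^ p)⁻¹) / (-p / 2)))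
          = Kc * ((1 - ε ^ p) / (1 - (1/2 : ℝ) ^ p)) := by
          field_simp
          ring
        rw [e3]
        have : 1 ≤ (1 - ε ^ p) / (1 - (1/2 : ℝ) ^ p) := by
          rw [one_le_div h2]; linarith
        nlinarith
      · intro h
        have e2 : -(n:ℝ) / (2 * k) + 1 = -p / 2 := by rw [hp]; field_simp; ring
        rw [h] at e2; linarith
    · rw [hrad _ _ hε, Ceps, if_pos hlt, ← hp, show 1 - (n:ℝ)/k = -p + -1 by rw [hp]; ring,
        rpow_add hε, rpow_neg hε.le, rpow_neg_one]
      apply le_of_eq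
      field_simp
  · refine ⟨Kc, hK, fun ε hε hε2 => ?_⟩
    have hlog : log ε < 0 := log_neg hε (by linarith)
    have hq : (n:ℝ) / k = 2 := by
      rw [← heq]; push_cast; field_simp
    refine ⟨Kc * |log ε|⁻¹, by rw [abs_of_neg hlog]; have : 0 < -log ε := by linarith
                               positivity, ?_, ?_⟩
    · rw [rad_integral n k _ ε hε (by linarith)]
      have e2 : -(n:ℝ) / (2 * k) = -1 := by
        rw [← heq]; push_cast; field_simp
      simp only [e2, rpow_neg_one]
      rw [integral_inv (hnot ε hε hε2), abs_of_neg hlog, one_div (ε ^ 2), log_inv, log_pow]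
      have : log ε ≠ 0 := by linarith
      apply le_of_eq
      push_cast
      field_simp
    · rw [hrad _ _ hε, Ceps, if_neg (by omega), if_pos heq, hq]
      apply le_of_eq
      rw [show (1:ℝ) - 2 = -1 by norm_num, rpow_neg_one]; ring
  · set p : ℝ := 2 - (n:ℝ) / k with hp
    have hp0 : 0 < p := by
      rw [hp, sub_pos, div_lt_iff₀ hk0]; exact_mod_cast hgt
    have h2 : (0:ℝ) < 1 - (1/2 : ℝ) ^ p := by
      rw [sub_pos]; exact rpow_lt_one (by norm_num) (by norm_num) hp0
    refine ⟨Kc / (1 - (1/2 : ℝ) ^ p), by positivity, fun ε hε hε2 => ?_⟩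
    have hεp : 0 < ε ^ p := rpow_pos_of_pos hε _
    refine ⟨Kc * p / (1 - (1/2 : ℝ) ^ p), by positivity, ?_, ?_⟩
    · rw [rad_integral n k _ ε hε (by linarith), integral_rpow (Or.inr ⟨?_, hnot ε hε hε2⟩), one_rpow,
        hsq ε hε]
      · have e1 : 2 * (-(n:ℝ) / (2 * k) + 1) = p := by rw [hp]; field_simp; ring
        have e2 : -(n:ℝ) / (2 * k) + 1 = p / 2 := by linarith
        rw [e1, e2]
        have h3 : ε ^ p ≤ (1/2 : ℝ) ^ p := rpow_le_rpow hε.le hε2.le hp0.le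
        have e3 : Kc * p / (1 - (1/2 : ℝ) ^ p) * (1 / 2 * ((1 - ε ^ p) / (p / 2)))
          = Kc * ((1 - ε ^ p) / (1 - (1/2 : ℝ) ^ p)) := by
          field_simp
        rw [e3]
        have : 1 ≤ (1 - ε ^ p) / (1 - (1/2 : ℝ) ^ p) := by
          rw [one_le_div h2]; linarith
        nlinarith
      · intro h
        have e2 : -(n:ℝ) / (2 * k) + 1 = p / 2 := by rw [hp]; field_simp; ring
        rw [h] at e2; linarith
    · rw [hrad _ _ hε, Ceps, if_neg (by omega), if_neg (by omega), ← hp]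
      apply le_of_eq
      ring

lemma bform_norm (n : ℕ) (a : Fin n → ℝ) (v : Euc n) :
    ‖bform n a v‖ = √(∑ i, (a i * v i) ^ 2) := by
  have e : bform n a v = innerSL ℝ (WithLp.toLp 2 (fun i => a i * v i) : Euc n) := by
    ext w
    rw [bform_apply, innerSL_apply_apply, PiLp.inner_apply]
    refine Finset.sum_congr rfl fun i _ => ?_
    simp [mul_comm]
  rw [e, innerSL_apply_norm, EuclideanSpace.norm_eq]
  simp only [Real.norm_eq_abs, sq_abs]

lemma euc_norm_sq (n : ℕ) (x : Euc n) : ‖x‖ ^ 2 = ∑ i, x i ^ 2 := by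
  rw [EuclideanSpace.norm_sq_eq]; simp

lemma qf_ones (n : ℕ) (z x : Euc n) : qf n (fun _ => 1) z x = ‖x - z‖ ^ 2 / 2 := by
  rw [qf, quad_diag, euc_norm_sq]; simp; ring

lemma qf_lower (n : ℕ) (a : Fin n → ℝ) (l : ℝ) (hl : ∀ i, l ≤ a i) (x : Euc n) :
    l / 2 * ‖x‖ ^ 2 ≤ qf n a 0 x := by
  rw [qf, quad_diag, euc_norm_sq, sub_zero, show ∀ y : ℝ, l / 2 * y = 1 / 2 * (l * y) by intro y; ring,
    Finset.mul_sum]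
  gcongr with i
  exact hl i

lemma qf_upper (n : ℕ) (a : Fin n → ℝ) (L : ℝ) (hL : ∀ i, a i ≤ L) (x : Euc n) :
    qf n a 0 x ≤ L / 2 * ‖x‖ ^ 2 := by
  rw [qf, quad_diag, euc_norm_sq, sub_zero, show ∀ y : ℝ, L / 2 * y = 1 / 2 * (L * y) by intro y; ring,
    Finset.mul_sum _ _ L]
  gcongr with i
  exact hL i

lemma qf_smul (n : ℕ) (a : Fin n → ℝ) (c : ℝ) (x : Euc n) : qf n a 0 (c • x) = c ^ 2 * qf n a 0 x := by
  rw [qf_eq, qf_eq]; simp; ring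

def Kset (n : ℕ) (a : Fin n → ℝ) (x₀ : Euc n) (ε R : ℝ) : Set (Euc n) :=
  {x | qf n a 0 x ≤ R ∧ ε ≤ ‖x - x₀‖}

def Dset (n : ℕ) (a : Fin n → ℝ) (x₀ : Euc n) (ε R : ℝ) : Set (Euc n) :=
  {x | qf n a 0 x < R ∧ ε < ‖x - x₀‖}

lemma Omega_eq (n : ℕ) (a : Fin n → ℝ) (x₀ : Euc n) (ε R : ℝ) (hε : 0 < ε) :
    OmegaRe n a x₀ ε R = Dset n a x₀ ε R := by
  ext x
  rw [OmegaRe, closure_ball x₀ hε.ne']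
  simp [ESet, Dset, qf, dist_eq_norm]

lemma qf_continuous (n : ℕ) (a : Fin n → ℝ) (z : Euc n) : Continuous (qf n a z) :=
  (qf_contDiff n a z).continuous

lemma Dset_open (n : ℕ) (a : Fin n → ℝ) (x₀ : Euc n) (ε R : ℝ) : IsOpen (Dset n a x₀ ε R) :=
  (isOpen_lt (qf_continuous n a 0) continuous_const).inter
    (isOpen_lt continuous_const (continuous_id.sub continuous_const).norm)

lemma sub_compact (n : ℕ) (a : Fin n → ℝ) (l : ℝ) (hl0 : 0 < l) (hl : ∀ i, l ≤ a i) (R : ℝ)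
    (S : Set (Euc n)) (hS : IsClosed S) (hSR : ∀ x ∈ S, qf n a 0 x ≤ R) : IsCompact S := by
  refine Metric.isCompact_of_isClosed_isBounded hS ?_
  refine (Metric.isBounded_closedBall (x := (0 : Euc n)) (r := √(2 * R / l))).subset ?_
  intro x hx
  rw [mem_closedBall_zero_iff]
  apply le_sqrt_of_sq_le
  have := qf_lower n a l hl x
  have := hSR x hx
  rw [le_div_iff₀ hl0]; linarith

lemma Kset_closed (n : ℕ) (a : Fin n → ℝ) (x₀ : Euc n) (ε R : ℝ) : IsClosed (Kset n a x₀ ε R) :=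
  (isClosed_le (qf_continuous n a 0) continuous_const).inter
    (isClosed_le continuous_const (continuous_id.sub continuous_const).norm)

lemma Dset_sub (n : ℕ) (a : Fin n → ℝ) (x₀ : Euc n) (ε R : ℝ) : Dset n a x₀ ε R ⊆ Kset n a x₀ ε R :=
  fun _ hx => ⟨hx.1.le, hx.2.le⟩

/-- Points on the small sphere have small `s`. -/
lemma geo_in (n : ℕ) (a : Fin n → ℝ) (L : ℝ) (hL0 : 0 < L) (hL : ∀ i, a i ≤ L) (x₀ x : Euc n) (ε : ℝ)
    (hε2 : ε < 1 / 2) (hx₀ : ‖x₀‖ < 1 / 2) (hx : ‖x - x₀‖ ≤ ε) : qf n a 0 x < L / 2 := by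
  have h1 : ‖x‖ < 1 := by
    have := norm_sub_norm_le x x₀
    linarith
  have h2 := qf_upper n a L hL x
  have : ‖x‖ ^ 2 < 1 := by nlinarith [norm_nonneg x]
  nlinarith

lemma geo_out (n : ℕ) (a : Fin n → ℝ) (L : ℝ) (hL0 : 0 < L) (hL : ∀ i, a i ≤ L) (x₀ x : Euc n) (ε : ℝ)
    (hε2 : ε < 1 / 2) (hx₀ : ‖x₀‖ < 1 / 2) (hx : L / 2 ≤ qf n a 0 x) : ε < ‖x - x₀‖ := by
  by_contra hc
  push Not at hc
  have := geo_in n a L hL0 hL x₀ x ε hε2 hx₀ hc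
  linarith

lemma K_closure (n : ℕ) (a : Fin n → ℝ) (L : ℝ) (hL0 : 0 < L) (hL : ∀ i, a i ≤ L) (x₀ : Euc n) (ε R : ℝ)
    (hε : 0 < ε) (hε2 : ε < 1 / 2) (hx₀ : ‖x₀‖ < 1 / 2) (hR : L ≤ R) :
    Kset n a x₀ ε R ⊆ closure (Dset n a x₀ ε R) := by
  intro x hx
  rcases hx.2.eq_or_lt with h | h
  · have hq := geo_in n a L hL0 hL x₀ x ε hε2 hx₀ h.ge
    have hT : Tendsto (fun t : ℝ => x + t • (x - x₀)) (𝓝 0) (𝓝 x) := by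
      have : Continuous (fun t : ℝ => x + t • (x - x₀)) := by fun_prop
      simpa using this.tendsto 0
    have hq' : ∀ᶠ y in 𝓝 x, qf n a 0 y < R :=
      (qf_continuous n a 0).continuousAt.eventually_lt continuousAt_const (by linarith)
    refine mem_closure_of_tendsto (hT.mono_left (nhdsWithin_le_nhds (s := Set.Ioi 0))) ?_
    filter_upwards [(hT.eventually hq').filter_mono nhdsWithin_le_nhds, self_mem_nhdsWithin] with t ht ht0
    refine ⟨ht, ?_⟩
    have ht0' : (0:ℝ) < t := ht0
    rw [show x + t • (x - x₀) - x₀ = (1 + t) • (x - x₀) by module, norm_smul, ← h,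
      Real.norm_of_nonneg (by linarith)]
    nlinarith
  · have hT : Tendsto (fun t : ℝ => (1 - t) • x) (𝓝 0) (𝓝 x) := by
      have : Continuous (fun t : ℝ => (1 - t) • x) := by fun_prop
      simpa using this.tendsto 0
    have hq' : ∀ᶠ y in 𝓝 x, ε < ‖y - x₀‖ := by
      have : Continuous (fun y : Euc n => ‖y - x₀‖) := by fun_prop
      exact continuousAt_const.eventually_lt this.continuousAt h
    refine mem_closure_of_tendsto (hT.mono_left (nhdsWithin_le_nhds (s := Set.Ioi 0))) ?_
    have h1 : ∀ᶠ t : ℝ in 𝓝[>] 0, t < 1 := (eventually_lt_nhds (by norm_num)).filter_mono nhdsWithin_le_nhds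
    filter_upwards [(hT.eventually hq').filter_mono nhdsWithin_le_nhds, self_mem_nhdsWithin, h1] with t ht ht0 ht1
    refine ⟨?_, ht⟩
    have ht0' : (0:ℝ) < t := ht0
    rw [qf_smul]
    have := hx.1
    have h3 : (1 - t) ^ 2 < 1 := by nlinarith
    have h4 : 0 ≤ (1 - t) ^ 2 := sq_nonneg _
    nlinarith

lemma bdry_grad {n : ℕ} (u f1 f2 g : Euc n → ℝ) (x : Euc n) (u' g' : Euc n →L[ℝ] ℝ) (c1 c2 : ℝ)
    (hu : HasFDerivAt u u' x) (hg : HasFDerivAt g g' x) (h1 : HasFDerivAt f1 (c1 • g') x)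
    (h2 : HasFDerivAt f2 (c2 • g') x) (hg0 : g' ≠ 0) (e1 : f1 x = u x) (e2 : f2 x = u x)
    (hev : ∀ᶠ y in 𝓝 x, g x < g y → f1 y ≤ u y ∧ u y ≤ f2 y) :
    ∃ τ : ℝ, c1 ≤ τ ∧ τ ≤ c2 ∧ u' = τ • g' := by
  obtain ⟨c, hc, hc'⟩ := bdry_first (u - f1) g x _ g' (hu.sub h1) hg hg0 (by
    filter_upwards [hev] with y hy hxy
    have := (hy hxy).1
    simp only [Pi.sub_apply]; linarith)
  obtain ⟨d, hd, hd'⟩ := bdry_first (f2 - u) g x _ g' (h2.sub hu) hg hg0 (by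
    filter_upwards [hev] with y hy hxy
    have := (hy hxy).2
    simp only [Pi.sub_apply]; linarith)
  have k1 : u' = (c1 + c) • g' := by rw [add_smul, ← hc']; abel
  have k2 : u' = (c2 - d) • g' := by
    ext v
    have := congrArg (fun T : Euc n →L[ℝ] ℝ => T v) hd'
    simp at this ⊢
    linarith
  have k3 : c1 + c = c2 - d := smul_left_injective ℝ hg0 (by simp only; rw [← k1, ← k2])
  exact ⟨c1 + c, by linarith, by linarith, k1⟩

lemma lin_GCone (n k : ℕ) (hk : k ≤ n) (a : Fin n → ℝ) (ha : ∀ i, 0 < a i) (z x : Euc n) (m d : ℝ) (hm : 0 < m) :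
    GCone n k (hessMat n (fun y => m * qf n a z y + d) x) := by
  intro j hj1 hj
  rw [lin_Sk n j hj1 (hj.trans hk)]
  exact mul_pos (pow_pos hm _) (esymm_pos n j (hj.trans hk) a ha)

lemma lin_fderiv (n : ℕ) (a : Fin n → ℝ) (z x : Euc n) (m d : ℝ) :
    HasFDerivAt (fun y => m * qf n a z y + d) (m • bform n a (x - z)) x :=
  ((qf_hasFDerivAt n a z x).const_mul m).add_const d

set_option maxHeartbeats 2000000 in
lemma main_est (n k : ℕ) (hn : 3 ≤ n) (hk1 : 1 ≤ k) (hkn : k ≤ n) (a : Fin n → ℝ) (ha : ∀ i, 0 < a i)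
    (h1 : esymmVec n k a = 1) (l L : ℝ) (hl0 : 0 < l) (hl : ∀ i, l ≤ a i) (hL0 : 0 < L) (hL : ∀ i, a i ≤ L)
    (R₀ : ℝ) (hR₀ : L ≤ R₀) (α : ℝ) (hα : 0 < α)
    (x₀ : Euc n) (hx₀ : ‖x₀‖ < 1 / 2) (ε : ℝ) (hε : 0 < ε) (hε2 : ε < 1 / 2) (R : ℝ) (hR : 3 * R₀ < R)
    (u : Euc n → ℝ) (hu : ApproxSol n k a x₀ ε R R₀ α u) (U : ℝ → ℝ)
    (hU : ∀ t, U t = ∫ s in R₀..t, genInt n k a α s) (hUR : R ≤ U R) (M : ℝ) (hM1 : 1 ≤ M)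
    (hM : U R ≤ M * R) (T : ℝ) (hT : U R ≤ R + T) (b : ℝ) (hb : 0 < b) (hb1 : b ^ k * (n.choose k : ℝ) = 1)
    (hQ : b * (8 * R₀ / l + 1 / 2) ≤ U (2 * R₀)) (m : ℝ) (hm : 0 < m)
    (hmK : 2 * R₀ + T ≤ ∫ s in (ε ^ 2 / 2)..(1 / 2), radg n k m s) :
    (∀ x ∈ Metric.sphere x₀ ε, 2 * b * ε ≤ ‖fderiv ℝ u x‖ ∧ ‖fderiv ℝ u x‖ ≤ radg n k m (ε ^ 2 / 2) * ε) ∧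
    (∀ x : Euc n, quadA n (Matrix.diagonal a) x = R →
      (1 / 2) * √(l * R) ≤ ‖fderiv ℝ u x‖ ∧ ‖fderiv ℝ u x‖ ≤ 2 * M * √(2 * L) * √R) := by
  obtain ⟨⟨V, hVo, hVs, hVc⟩, hconv, hSk, hin, hout⟩ := hu
  rw [Omega_eq n a x₀ ε R hε] at hVs hconv hSk
  have hR₀0 : 0 < R₀ := hL0.trans_le hR₀
  have hR0 : 0 < R := by linarith
  have hKcl := K_closure n a L hL0 hL x₀ ε R hε hε2 hx₀ (by linarith)
  have hcd : ∀ x ∈ Kset n a x₀ ε R, ContDiffAt ℝ 2 u x := fun x hx =>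
    ((hVc.contDiffAt (hVo.mem_nhds (hVs (hKcl hx)))).of_le (WithTop.coe_le_coe.2 (le_top : (2:ℕ∞) ≤ ⊤)))
  have hcont : ContinuousOn u (Kset n a x₀ ε R) := fun x hx => (hcd x hx).continuousAt.continuousWithinAt
  have hG : ∀ x ∈ Dset n a x₀ ε R, GCone n k (hessMat n u x) := hconv
  have hS : ∀ x ∈ Dset n a x₀ ε R, matSk n k (hessMat n u x) = 1 := hSk
  have hin' : ∀ x, ‖x - x₀‖ = ε → u x = 0 := fun x hx => hin x (by rwa [mem_sphere_iff_norm])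
  have hubar : ∀ x, ubar n k a R₀ α x = U (qf n a 0 x) := by
    intro x; rw [hU, ubar_eq]
  have hout' : ∀ x, qf n a 0 x = R → u x = U R := fun x hx => by
    have hx' : quadA n (Matrix.diagonal a) x = R := by rw [← hx, qf, sub_zero]
    rw [hout x hx', hubar, hx]
  have hKc : ∀ r, IsCompact (Kset n a x₀ ε r) := fun r =>
    sub_compact n a l hl0 hl r _ (Kset_closed n a x₀ ε r) fun x hx => hx.1
  have hbd : ∀ r, ∀ x ∈ Kset n a x₀ ε r \ Dset n a x₀ ε r, ‖x - x₀‖ = ε ∨ qf n a 0 x = r := by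
    rintro r x ⟨hx, hx'⟩
    by_contra hc
    push Not at hc
    exact hx' ⟨lt_of_le_of_ne hx.1 hc.2, lt_of_le_of_ne hx.2 (Ne.symm hc.1)⟩
  have hqnn : ∀ x, 0 ≤ qf n a 0 x := fun x => by
    have := qf_lower n a l hl x
    have h2 : 0 ≤ l / 2 * ‖x‖ ^ 2 := by positivity
    linarith
  have hinq : ∀ x, ‖x - x₀‖ = ε → qf n a 0 x < L / 2 := fun x hx =>
    geo_in n a L hL0 hL x₀ x ε hε2 hx₀ hx.le
  -- step 1
  have S1 : ∀ x ∈ Kset n a x₀ ε R, u x ≤ 1 * qf n a 0 x + (U R - R) := by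
    refine cmpr n k hk1 hkn (Dset n a x₀ ε R) _ (Dset_open n a x₀ ε R) (Dset_sub n a x₀ ε R) (hKc R) u _ hcont
      (lin_cont n a 0 _ _).continuousOn (fun x hx => hcd x (Dset_sub n a x₀ ε R hx))
      (fun x _ => lin_cd n a 0 x _ _) hG (fun x hx => (hS x hx).ge) (fun x _ => ?_) (fun x hx => ?_)
    · rw [lin_Sk n k hk1 hkn, h1]; simp
    · rcases hbd R x hx with h | h
      · rw [hin' x h]; linarith [hqnn x]
      · rw [hout' x h, h]; linarith
  -- step 2
  have S2 : ∀ x ∈ Kset n a x₀ ε R, (2 * M) * qf n a 0 x + (U R - 2 * M * R) ≤ u x := by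
    refine cmpr n k hk1 hkn (Dset n a x₀ ε R) _ (Dset_open n a x₀ ε R) (Dset_sub n a x₀ ε R) (hKc R) _ u
      (lin_cont n a 0 _ _).continuousOn hcont (fun x _ => lin_cd n a 0 x _ _)
      (fun x hx => hcd x (Dset_sub n a x₀ ε R hx)) (fun x _ => lin_GCone n k hkn a ha 0 x _ _ (by linarith))
      (fun x _ => ?_) (fun x hx => (hS x hx).le) (fun x hx => ?_)
    · rw [lin_Sk n k hk1 hkn, h1, mul_one]; exact one_le_pow₀ (by linarith)
    · rcases hbd R x hx with h | h
      · rw [hin' x h]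
        have h3 := hinq x h
        nlinarith
      · rw [hout' x h, h]; linarith
  -- step 3
  have S3 : ∀ x ∈ Kset n a x₀ ε R, (U R / R) * qf n a 0 x + (-(U R / R * (L / 2))) ≤ u x := by
    have hM' : 1 ≤ U R / R := by rw [one_le_div hR0]; exact hUR
    refine cmpr n k hk1 hkn (Dset n a x₀ ε R) _ (Dset_open n a x₀ ε R) (Dset_sub n a x₀ ε R) (hKc R) _ u
      (lin_cont n a 0 _ _).continuousOn hcont (fun x _ => lin_cd n a 0 x _ _)
      (fun x hx => hcd x (Dset_sub n a x₀ ε R hx)) (fun x _ => lin_GCone n k hkn a ha 0 x _ _ (by linarith))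
      (fun x _ => ?_) (fun x hx => (hS x hx).le) (fun x hx => ?_)
    · rw [lin_Sk n k hk1 hkn, h1, mul_one]; exact one_le_pow₀ hM'
    · rcases hbd R x hx with h | h
      · rw [hin' x h]
        have h3 := hinq x h
        nlinarith
      · rw [hout' x h, h, div_mul_cancel₀ _ hR0.ne']
        have : 0 ≤ U R / R * (L / 2) := by positivity
        linarith
  have hKmem : ∀ x, R₀ ≤ qf n a 0 x → qf n a 0 x ≤ R → x ∈ Kset n a x₀ ε R := fun x hx hx' =>
    ⟨hx', (geo_out n a L hL0 hL x₀ x ε hε2 hx₀ (by linarith)).le⟩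
  -- step 4
  have S4 : ∀ x ∈ {x | R₀ ≤ qf n a 0 x ∧ qf n a 0 x ≤ R}, ubar n k a R₀ α x ≤ u x := by
    have hop : IsOpen {x | R₀ < qf n a 0 x ∧ qf n a 0 x < R} :=
      (isOpen_lt continuous_const (qf_continuous n a 0)).inter (isOpen_lt (qf_continuous n a 0) continuous_const)
    have hcl : IsClosed {x | R₀ ≤ qf n a 0 x ∧ qf n a 0 x ≤ R} :=
      (isClosed_le continuous_const (qf_continuous n a 0)).inter (isClosed_le (qf_continuous n a 0) continuous_const)
    have hb : ∀ x, R₀ ≤ qf n a 0 x → _ := fun x hx =>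
      ubar_barrier n k hn hk1 hkn a ha h1 R₀ α hR₀0 hα x (hR₀0.trans_le hx)
    have hDs : ∀ x ∈ {x | R₀ < qf n a 0 x ∧ qf n a 0 x < R}, x ∈ Dset n a x₀ ε R := fun x hx =>
      ⟨hx.2, geo_out n a L hL0 hL x₀ x ε hε2 hx₀ (by linarith [hx.1])⟩
    refine cmpr n k hk1 hkn {x | R₀ < qf n a 0 x ∧ qf n a 0 x < R} {x | R₀ ≤ qf n a 0 x ∧ qf n a 0 x ≤ R} hop
      (fun x hx => ⟨le_of_lt hx.1, le_of_lt hx.2⟩)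
      (sub_compact n a l hl0 hl R _ hcl fun x hx => hx.2) _ u
      (fun x hx => (hb x hx.1).1.continuousAt.continuousWithinAt)
      (fun x hx => (hcd x (hKmem x hx.1 hx.2)).continuousAt.continuousWithinAt)
      (fun x hx => (hb x hx.1.le).1) (fun x hx => hcd x (hKmem x hx.1.le hx.2.le))
      (fun x hx => (hb x hx.1.le).2.2) (fun x hx => (hb x hx.1.le).2.1)
      (fun x hx => (hS x (hDs x hx)).le) ?_
    rintro x ⟨hx, hx'⟩
    rw [hubar]
    rcases hx.1.eq_or_lt with h | h
    · have h3 := S3 x (hKmem x hx.1 hx.2)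
      rw [← h] at h3 ⊢
      rw [hU, intervalIntegral.integral_same]
      refine le_trans ?_ h3
      have hM' : 0 ≤ U R / R := by
        have : 0 < U R := by linarith
        positivity
      nlinarith
    · have : qf n a 0 x = R := le_antisymm hx.2 (by
        by_contra hc
        push Not at hc
        exact hx' ⟨h, hc⟩)
      rw [hout' x this, this]
  have hsubK : Kset n a x₀ ε (2 * R₀) ⊆ Kset n a x₀ ε R := fun x hx => ⟨hx.1.trans (by linarith), hx.2⟩
  have hsubD : Dset n a x₀ ε (2 * R₀) ⊆ Dset n a x₀ ε R := fun x hx => ⟨hx.1.trans (by linarith), hx.2⟩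
  have hone : ∀ i : Fin n, (0:ℝ) < (fun _ : Fin n => (1:ℝ)) i := fun _ => one_pos
  -- step 5
  have S5 : ∀ x ∈ Kset n a x₀ ε (2 * R₀), (2 * b) * qf n (fun _ => 1) x₀ x + (- (b * ε ^ 2)) ≤ u x := by
    refine cmpr n k hk1 hkn (Dset n a x₀ ε (2 * R₀)) _ (Dset_open n a x₀ ε _) (Dset_sub n a x₀ ε _) (hKc _) _ u
      (lin_cont n _ _ _ _).continuousOn (hcont.mono hsubK) (fun x _ => lin_cd n _ _ x _ _)
      (fun x hx => hcd x (hsubK (Dset_sub n a x₀ ε _ hx)))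
      (fun x _ => lin_GCone n k hkn _ hone _ x _ _ (by linarith))
      (fun x _ => ?_) (fun x hx => (hS x (hsubD hx)).le) (fun x hx => ?_)
    · rw [lin_Sk n k hk1 hkn, esymm_ones, mul_pow, mul_assoc, hb1, mul_one]; exact one_le_pow₀ (by norm_num)
    · rw [qf_ones]
      rcases hbd _ x hx with h | h
      · rw [hin' x h, h]; linarith
      · have h4 := S4 x ⟨by linarith, by linarith⟩
        rw [hubar, h] at h4
        have h5 : ‖x - x₀‖ ^ 2 ≤ 8 * R₀ / l + 1 / 2 := by
          have h6 : ‖x - x₀‖ ≤ ‖x‖ + 1 / 2 := (norm_sub_le x x₀).trans (by linarith)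
          have h7 : ‖x‖ ^ 2 ≤ 4 * R₀ / l := by
            rw [le_div_iff₀ hl0]
            have := qf_lower n a l hl x
            rw [h] at this; linarith
          have h8 : ‖x - x₀‖ ^ 2 ≤ (‖x‖ + 1 / 2) ^ 2 := pow_le_pow_left₀ (norm_nonneg _) h6 2
          have h9 : 8 * R₀ / l = 2 * (4 * R₀ / l) := by ring
          nlinarith [sq_nonneg (‖x‖ - 1 / 2)]
        have := mul_le_mul_of_nonneg_left h5 hb.le
        have := sq_nonneg ε
        nlinarith
  -- step 6
  have hgc := radg_contDiffOn n k m
  have hε22 : 0 < ε ^ 2 / 2 := by positivity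
  have hqK : ∀ r, ∀ x ∈ Kset n a x₀ ε r, ε ^ 2 / 2 ≤ qf n (fun _ => 1) x₀ x := fun r x hx => by
    rw [qf_ones]
    have := pow_le_pow_left₀ hε.le hx.2 2
    linarith
  have S6 : ∀ x ∈ Kset n a x₀ ε (2 * R₀),
      u x ≤ (fun t => ∫ s in (ε ^ 2 / 2)..t, radg n k m s) (qf n (fun _ => 1) x₀ x) := by
    have hb : ∀ x ∈ Kset n a x₀ ε (2 * R₀), _ := fun x hx =>
      radial_barrier n k hn hk1 hkn m _ hε22 x₀ x (hε22.trans_le (hqK _ x hx))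
    refine cmpr n k hk1 hkn (Dset n a x₀ ε (2 * R₀)) _ (Dset_open n a x₀ ε _) (Dset_sub n a x₀ ε _) (hKc _) u _
      (hcont.mono hsubK) (fun x hx => (hb x hx).1.continuousAt.continuousWithinAt)
      (fun x hx => hcd x (hsubK (Dset_sub n a x₀ ε _ hx))) (fun x hx => (hb x (Dset_sub n a x₀ ε _ hx)).1)
      (fun x hx => hG x (hsubD hx)) (fun x hx => (hS x (hsubD hx)).ge)
      (fun x hx => ?_) (fun x hx => ?_)
    · rw [(hb x (Dset_sub n a x₀ ε _ hx)).2]; norm_num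
    · simp only
      rcases hbd _ x hx with h | h
      · rw [hin' x h, qf_ones, h, intervalIntegral.integral_same]
      · have h3 := S1 x (hsubK hx.1)
        rw [h] at h3
        have h4 : 1 / 2 ≤ qf n (fun _ => 1) x₀ x := by
          rw [qf_ones]
          have h5 := qf_upper n a L hL x
          rw [h] at h5
          have h6 : 4 ≤ ‖x‖ ^ 2 := by
            by_contra hc
            push Not at hc
            nlinarith
          have h7 : 2 ≤ ‖x‖ := by nlinarith [norm_nonneg x]
          have h8 := norm_sub_norm_le x x₀
          have h9 : 1 ≤ ‖x - x₀‖ := by linarith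
          nlinarith
        have hmono : ∫ s in (ε ^ 2 / 2)..(1 / 2), radg n k m s
            ≤ ∫ s in (ε ^ 2 / 2)..(qf n (fun _ => 1) x₀ x), radg n k m s := by
          have hii : ∀ c d : ℝ, 0 < c → 0 < d → IntervalIntegrable (radg n k m) volume c d := by
            intro c d hc hd
            refine (hgc.continuousOn.mono ?_).intervalIntegrable
            intro y hy
            rw [Set.mem_uIcc] at hy
            rcases hy with hy | hy
            · exact hc.trans_le hy.1
            · exact hd.trans_le hy.1
          rw [← intervalIntegral.integral_add_adjacent_intervals (hii _ (1/2) hε22 (by norm_num))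
            (hii (1/2) (qf n (fun _ => 1) x₀ x) (by norm_num) (by linarith))]
          have : 0 ≤ ∫ s in (1/2)..(qf n (fun _ => 1) x₀ x), radg n k m s := by
            refine intervalIntegral.integral_nonneg h4 fun t ht => ?_
            have : 0 ≤ 2 * t := by linarith [ht.1]
            exact mul_nonneg hm.le (rpow_nonneg this _)
          linarith
        linarith
  have hdiff : ∀ x ∈ Kset n a x₀ ε R, HasFDerivAt u (fderiv ℝ u x) x := fun x hx =>
    ((hcd x hx).differentiableAt (by norm_num)).hasFDerivAt
  constructor
  · intro x hx
    rw [mem_sphere_iff_norm] at hx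
    have hxq := hinq x hx
    have hxK : x ∈ Kset n a x₀ ε (2 * R₀) := ⟨by linarith, hx.ge⟩
    have hqx : qf n (fun _ => 1) x₀ x = ε ^ 2 / 2 := by rw [qf_ones, hx]
    have hnorm : ‖bform n (fun _ => 1) (x - x₀)‖ = ε := by
      rw [bform_norm]
      simp only [one_mul]
      rw [← euc_norm_sq, sqrt_sq (norm_nonneg _), hx]
    have hprim := prim_hasDerivAt _ hgc _ (qf n (fun _ => 1) x₀ x) hε22 (by rw [hqx]; exact hε22)
    have hd2 : HasFDerivAt (fun y => (fun t => ∫ s in (ε ^ 2 / 2)..t, radg n k m s) (qf n (fun _ => 1) x₀ y))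
        (radg n k m (ε ^ 2 / 2) • bform n (fun _ => 1) (x - x₀)) x := by
      have := hprim.comp_hasFDerivAt x (qf_hasFDerivAt n (fun _ => 1) x₀ x)
      rw [hqx] at this
      exact this
    have hg0 : bform n (fun _ => 1) (x - x₀) ≠ 0 := by
      intro h
      rw [h, norm_zero] at hnorm; linarith
    have hev : ∀ᶠ y in 𝓝 x, qf n a 0 y < 2 * R₀ :=
      (qf_continuous n a 0).continuousAt.eventually_lt continuousAt_const (by linarith)
    obtain ⟨τ, ht1, ht2, ht3⟩ := bdry_grad u
      (fun y => (2 * b) * qf n (fun _ => 1) x₀ y + (- (b * ε ^ 2)))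
      (fun y => (fun t => ∫ s in (ε ^ 2 / 2)..t, radg n k m s) (qf n (fun _ => 1) x₀ y))
      (qf n (fun _ => 1) x₀) x _ _ _ _ (hdiff x (hsubK hxK))
      (qf_hasFDerivAt n (fun _ => 1) x₀ x) (lin_fderiv n (fun _ => 1) x₀ x (2 * b) (-(b * ε ^ 2))) hd2 hg0
      (by simp only [hin' x hx, hqx]; ring) (by simp only [hqx, intervalIntegral.integral_same, hin' x hx])
      (by
        filter_upwards [hev] with y hy hxy
        have hyK : y ∈ Kset n a x₀ ε (2 * R₀) := by
          refine ⟨hy.le, ?_⟩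
          rw [hqx, qf_ones] at hxy
          by_contra hc
          push Not at hc
          nlinarith [norm_nonneg (y - x₀)]
        exact ⟨S5 y hyK, S6 y hyK⟩)
    rw [ht3, norm_smul, hnorm, Real.norm_of_nonneg (by linarith)]
    exact ⟨mul_le_mul_of_nonneg_right ht1 hε.le, mul_le_mul_of_nonneg_right ht2 hε.le⟩
  · intro x hx
    have hx : qf n a 0 x = R := by rw [qf, sub_zero, hx]
    have hxK := hKmem x (by linarith) hx.le
    have hsum : ∑ i, a i * x i ^ 2 = 2 * R := by
      have := hx
      rw [qf, sub_zero, quad_diag] at this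
      linarith
    have hnorm : ‖-(bform n a (x - 0))‖ = √(∑ i, (a i * x i) ^ 2) := by
      rw [norm_neg, bform_norm, sub_zero]
    have hlo : l * (2 * R) ≤ ∑ i, (a i * x i) ^ 2 := by
      rw [← hsum, Finset.mul_sum]
      refine Finset.sum_le_sum fun i _ => ?_
      have : 0 ≤ a i * x i ^ 2 := mul_nonneg (ha i).le (sq_nonneg _)
      nlinarith [mul_le_mul_of_nonneg_right (hl i) this]
    have hhi : ∑ i, (a i * x i) ^ 2 ≤ (2 * L) * R := by
      rw [show 2 * L * R = L * (2 * R) by ring, ← hsum, Finset.mul_sum]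
      refine Finset.sum_le_sum fun i _ => ?_
      have : 0 ≤ a i * x i ^ 2 := mul_nonneg (ha i).le (sq_nonneg _)
      nlinarith [mul_le_mul_of_nonneg_right (hL i) this]
    have hg0 : -(bform n a (x - 0)) ≠ 0 := by
      intro h
      rw [h, norm_zero] at hnorm
      have : 0 < ∑ i, (a i * x i) ^ 2 := lt_of_lt_of_le (by positivity) hlo
      have := sqrt_pos.2 this
      linarith
    have hev : ∀ᶠ y in 𝓝 x, R₀ < qf n a 0 y :=
      continuousAt_const.eventually_lt (qf_continuous n a 0).continuousAt (by linarith)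
    have hf1 := lin_fderiv n a 0 x (2 * M) (U R - 2 * M * R)
    have hf2 := lin_fderiv n a 0 x 1 (U R - R)
    rw [show (2 * M) • bform n a (x - 0) = (-(2 * M)) • (-(bform n a (x - 0))) by simp] at hf1
    rw [show (1:ℝ) • bform n a (x - 0) = (-1 : ℝ) • (-(bform n a (x - 0))) by simp] at hf2
    obtain ⟨τ, ht1, ht2, ht3⟩ := bdry_grad u (fun y => (2 * M) * qf n a 0 y + (U R - 2 * M * R))
      (fun y => 1 * qf n a 0 y + (U R - R)) (-(qf n a 0)) x _ _ _ _ (hdiff x hxK)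
      (qf_hasFDerivAt n a 0 x).neg hf1 hf2 hg0
      (by simp only [hout' x hx, hx]; ring) (by simp only [hout' x hx, hx]; ring)
      (by
        filter_upwards [hev] with y hy hxy
        simp only [Pi.neg_apply] at hxy
        have hyK := hKmem y hy.le (by linarith)
        exact ⟨S2 y hyK, S1 y hyK⟩)
    rw [ht3, norm_smul, hnorm, Real.norm_of_nonpos (by linarith)]
    have hs1 : √(l * R) ≤ √(∑ i, (a i * x i) ^ 2) := sqrt_le_sqrt (by
      have : 0 < l * R := by positivity
      linarith)
    have hs2 : √(∑ i, (a i * x i) ^ 2) ≤ √(2 * L) * √R := by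
      rw [← sqrt_mul (by positivity)]
      exact sqrt_le_sqrt hhi
    have hs0 := sqrt_nonneg (l * R)
    have hs3 := sqrt_nonneg (∑ i, (a i * x i) ^ 2)
    constructor
    · nlinarith
    · calc -τ * √(∑ i, (a i * x i) ^ 2) ≤ (2 * M) * √(∑ i, (a i * x i) ^ 2) := by gcongr; linarith
        _ ≤ (2 * M) * (√(2 * L) * √R) := by gcongr
        _ = _ := by ring

/-- Lemma 2.3: boundary gradient estimates on `∂B_ε(x₀)` and `∂E_R(0)`,
with `a* = (C_n^k)^{-1/k}`. -/
theorem statement5 (n k : ℕ) (hn : 3 ≤ n) (hk1 : 1 ≤ k) (hkn : k ≤ n)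
    (a : Fin n → ℝ) (hA : MemA n k (Matrix.diagonal a))
    (hk1' : k = 1 → (⨆ i, a i) < 1 / 2) :
    ∃ Λ₀ : ℝ, 0 < Λ₀ ∧ ∀ R₀ : ℝ, Λ₀ ≤ R₀ →
      ∃ α₀ : ℝ, 0 < α₀ ∧ ∀ α : ℝ, α₀ ≤ α →
        ∃ C : ℝ, 0 < C ∧
        ∀ x₀ : Euc n, x₀ ∈ Metric.ball (0 : Euc n) (1 / 2) → x₀ ≠ 0 →
        ∀ ε : ℝ, 0 < ε → ε < 1 / 2 →
        ∀ R : ℝ, 3 * R₀ < R →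
        ∀ u : Euc n → ℝ, ApproxSol n k a x₀ ε R R₀ α u →
          (∀ x ∈ Metric.sphere x₀ ε,
            2 * ((n.choose k : ℝ) ^ (-(1 : ℝ) / (k : ℝ))) * ε ≤ ‖fderiv ℝ u x‖ ∧
            ‖fderiv ℝ u x‖ ≤ Ceps n k C ε) ∧
          (∀ x : Euc n, quadA n (Matrix.diagonal a) x = R →
            (1 / 2) * Real.sqrt ((⨅ i, a i) * R) ≤ ‖fderiv ℝ u x‖ ∧
            ‖fderiv ℝ u x‖ ≤ C * Real.sqrt R) := by
  obtain ⟨-, hpd, hSk⟩ := hA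
  have ha : ∀ i, 0 < a i := Matrix.posDef_diagonal_iff.1 hpd
  have h1 : esymmVec n k a = 1 := by rw [← nw_matSk_diag n k hkn a]; exact hSk
  haveI : Nonempty (Fin n) := ⟨⟨0, by omega⟩⟩
  have hk0 : (0:ℝ) < k := by exact_mod_cast hk1
  set l : ℝ := ⨅ i, a i with hldef
  have hl : ∀ i, l ≤ a i := fun i => ciInf_le (Set.finite_range a).bddBelow i
  have hl0 : 0 < l := by
    obtain ⟨i, hi⟩ := Finite.exists_min a
    exact (ha i).trans_le (le_ciInf hi)
  set L : ℝ := ∑ i, a i with hLdef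
  have hL : ∀ i, a i ≤ L := fun i => Finset.single_le_sum (fun j _ => (ha j).le) (Finset.mem_univ i)
  have hL0 : 0 < L := Finset.sum_pos (fun j _ => ha j) Finset.univ_nonempty
  have hpos := hk_pos n k hn hk1 hkn a ha
  have hE := genExp_lt n k a hpos (hk_lt n k hn hk1 hkn a ha h1 hk1')
  set b : ℝ := (n.choose k : ℝ) ^ (-(1 : ℝ) / (k : ℝ)) with hbdef
  have hch : (0:ℝ) < n.choose k := by exact_mod_cast Nat.choose_pos hkn
  have hb : 0 < b := rpow_pos_of_pos hch _
  have hb1 : b ^ k * (n.choose k : ℝ) = 1 := by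
    rw [hbdef, ← rpow_natCast, ← rpow_mul hch.le, div_mul_cancel₀ _ hk0.ne', rpow_neg_one]
    exact inv_mul_cancel₀ hch.ne'
  refine ⟨L, hL0, fun R₀ hR₀ => ?_⟩
  have hR₀0 : 0 < R₀ := hL0.trans_le hR₀
  set Q : ℝ := b * (8 * R₀ / l + 1 / 2) + 2 * R₀ with hQ
  have hQ0 : 0 < b * (8 * R₀ / l + 1 / 2) := by positivity
  have hq0 : 0 < Q / R₀ := by positivity
  have h2R : 0 < 2 * R₀ := by linarith
  refine ⟨(Q / R₀) ^ k * (2 * R₀) ^ (-genExp n k a), mul_pos (pow_pos hq0 _) (rpow_pos_of_pos h2R _),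
    fun α hαα => ?_⟩
  have hα : 0 < α := lt_of_lt_of_le (mul_pos (pow_pos hq0 _) (rpow_pos_of_pos h2R _)) hαα
  have hgi : Q / R₀ ≤ genInt n k a α (2 * R₀) := by
    refine le_of_pow_le_pow_left₀ (n := k) (by omega)
      (by linarith [gi_one_le n k a α (2 * R₀) hα h2R]) ?_
    rw [gi_pow n k hk1 a α _ hα h2R]
    have h3 := mul_le_mul_of_nonneg_right hαα (rpow_nonneg h2R.le (genExp n k a))
    rw [mul_assoc, ← rpow_add h2R, neg_add_cancel, rpow_zero, mul_one] at h3
    linarith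
  set U : ℝ → ℝ := fun t => ∫ s in R₀..t, genInt n k a α s with hU
  have hU2 : Q ≤ U (2 * R₀) := by
    have h3 := gi_le_int n k a (by linarith) α hα R₀ (2 * R₀) hR₀0 (by linarith)
    have h4 : Q / R₀ * R₀ ≤ genInt n k a α (2 * R₀) * R₀ := mul_le_mul_of_nonneg_right hgi hR₀0.le
    rw [div_mul_cancel₀ _ hR₀0.ne'] at h4
    rw [show 2 * R₀ - R₀ = R₀ by ring] at h3
    exact h4.trans h3
  set T : ℝ := α * (R₀ ^ (genExp n k a + 1) / (- (genExp n k a + 1))) with hT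
  have hT0 : 0 ≤ T := mul_nonneg hα.le (div_nonneg (rpow_nonneg hR₀0.le _) (by linarith))
  obtain ⟨C1, hC1, hrad⟩ := rad_const n k hk1 (2 * R₀ + T) (by linarith)
  set M : ℝ := genInt n k a α R₀ with hM
  have hM1 : 1 ≤ M := gi_one_le n k a α R₀ hα hR₀0
  have hc2 : 0 ≤ 2 * M * √(2 * L) := by positivity
  refine ⟨C1 + 2 * M * √(2 * L), by linarith, fun x₀ hx₀ _ ε hε hε2 R hR u hu => ?_⟩
  obtain ⟨m, hm, hmK, hmC⟩ := hrad ε hε hε2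
  have hUR : R ≤ U R := by
    have h3 := gi_le_int n k a (by linarith) α hα (2 * R₀) R h2R (by linarith)
    have h4 := gi_int_add n k a α hα R₀ (2 * R₀) R hR₀0 h2R (by linarith)
    have h5 := gi_one_le n k a α R hα (by linarith)
    have h6 : U R = U (2 * R₀) + ∫ t in (2 * R₀)..R, genInt n k a α t := h4
    nlinarith
  have hUM : U R ≤ M * R := by
    have h3 : U R ≤ M * (R - R₀) := gi_int_le n k a (by linarith) α hα R₀ R hR₀0 (by linarith)
    nlinarith
  have hUT : U R ≤ R + T := gi_tail n k hk1 a hE α hα R₀ R hR₀0 (by linarith)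
  obtain ⟨r1, r2⟩ := main_est n k hn hk1 hkn a ha h1 l L hl0 hl hL0 hL R₀ hR₀ α hα x₀
    (by simpa using hx₀) ε hε hε2 R hR u hu U (fun _ => rfl) hUR M hM1 hUM T hUT b hb hb1
    (by linarith) m hm hmK
  refine ⟨fun x hx => ⟨(r1 x hx).1, (r1 x hx).2.trans (hmC.trans (Ceps_mono n k hk1 _ _ ε hε (by linarith)))⟩,
    fun x hx => ⟨(r2 x hx).1, (r2 x hx).2.trans ?_⟩⟩
  gcongr
  linarith
end

section
/- Let Ω ⊂ ℝⁿ be a bounded domain and let u ∈ C³(Ω) ∩ C¹(Ω̄) be a k-convex solution of S_k(D²u) = 1 in Ω. Then the maximum of |Du| over Ω̄ is attained on the boundary: max_{Ω̄} |Du| = max_{∂Ω} |Du|. -/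
open scoped Classical Topology
open Real Filter MeasureTheory

section Algebra
open Polynomial

theorem splits_derivative_real (p : ℝ[X]) (hp : p.Splits) : (derivative p).Splits := by
  rw [splits_iff_card_roots] at hp ⊢
  have h1 := card_roots_le_derivative p
  have h2 := natDegree_derivative_le p
  have h3 := card_roots' (derivative p)
  by_cases h0 : p.natDegree = 0
  · have : derivative p = 0 := derivative_of_natDegree_zero h0
    simp [this]
  · omega

theorem laguerre_zero (s : Multiset ℝ) :
    2 * ((s.map fun r => X - C r).prod.coeff 0 * (s.map fun r => X - C r).prod.coeff 2) ≤
      (s.map fun r => X - C r).prod.coeff 1 ^ 2 := by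
  induction s using Multiset.induction_on with
  | empty => simp [coeff_one]
  | cons a s ih =>
    rw [Multiset.map_cons, Multiset.prod_cons]
    set g := (s.map fun r => X - C r).prod
    have e0 : ((X - C a) * g).coeff 0 = - a * g.coeff 0 := by
      simp [sub_mul]
    have e1 : ((X - C a) * g).coeff 1 = g.coeff 0 - a * g.coeff 1 := by
      simp [sub_mul]
    have e2 : ((X - C a) * g).coeff 2 = g.coeff 1 - a * g.coeff 2 := by
      simp [sub_mul]
    rw [e0, e1, e2]
    nlinarith [sq_nonneg (g.coeff 0), mul_le_mul_of_nonneg_left ih (sq_nonneg a)]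

theorem newton_coeff (m : ℕ) : ∀ p : ℝ[X], p.Splits →
    ((m : ℝ) + 2) * (p.coeff m * p.coeff (m + 2)) ≤ ((m : ℝ) + 1) * p.coeff (m + 1) ^ 2 := by
  induction m with
  | zero =>
    intro p hp
    have h := hp.eq_prod_roots
    have hl := laguerre_zero p.roots
    rw [h]
    simp only [coeff_C_mul]
    simp only [Nat.cast_zero, zero_add]
    nlinarith [mul_le_mul_of_nonneg_left hl (sq_nonneg p.leadingCoeff)]
  | succ m ih =>
    intro p hp
    have h := ih _ (splits_derivative_real p hp)
    simp only [coeff_derivative] at h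
    push_cast at h ⊢
    have hm : (0 : ℝ) < ((m : ℝ) + 1) * (m + 2) := by positivity
    refine le_of_mul_le_mul_left ?_ hm
    ring_nf at h ⊢
    linarith

theorem esymm_cons_succ (a : ℝ) (s : Multiset ℝ) (j : ℕ) :
    (a ::ₘ s).esymm (j + 1) = s.esymm (j + 1) + a * s.esymm j := by
  simp [Multiset.esymm, Multiset.powersetCard_cons, Multiset.sum_map_mul_left]

theorem newton_esymm (s : Multiset ℝ) (j : ℕ) :
    s.esymm j * s.esymm (j + 2) ≤ s.esymm (j + 1) ^ 2 := by
  by_cases hj : j + 2 ≤ Multiset.card s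
  · obtain ⟨m, hm⟩ := Nat.exists_eq_add_of_le hj
    have hs : ((s.map fun r => X + C r).prod).Splits := by
      apply Splits.multisetProd
      intro f hf
      obtain ⟨r, -, rfl⟩ := Multiset.mem_map.1 hf
      exact Splits.X_add_C r
    have h := newton_coeff m _ hs
    rw [Multiset.prod_X_add_C_coeff _ (by omega), Multiset.prod_X_add_C_coeff _ (by omega),
      Multiset.prod_X_add_C_coeff _ (by omega)] at h
    have a0 : Multiset.card s - m = j + 2 := by omega
    have a1 : Multiset.card s - (m + 1) = j + 1 := by omega
    have a2 : Multiset.card s - (m + 2) = j := by omega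
    rw [a0, a1, a2] at h
    have hm : (0 : ℝ) ≤ m := Nat.cast_nonneg m
    by_contra hc
    push Not at hc
    nlinarith [sq_nonneg (s.esymm (j + 1)), mul_lt_mul_of_pos_left hc (by positivity : (0:ℝ) < m + 1)]
  · have : s.esymm (j + 2) = 0 := by
      simp [Multiset.esymm, Multiset.powersetCard_eq_empty (s := s) (j + 2) (by omega)]
    rw [this]; nlinarith [sq_nonneg (s.esymm (j + 1))]

theorem esymm_zero' (s : Multiset ℝ) : s.esymm 0 = 1 := by
  simp [Multiset.esymm]

theorem garding (a : ℝ) (s : Multiset ℝ) (k : ℕ)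
    (h : ∀ j, j ≤ k + 1 → 0 < (a ::ₘ s).esymm j) : 0 < s.esymm k := by
  induction k with
  | zero => simp [esymm_zero']
  | succ k ih =>
    have h1 := ih (fun j hj => h j (by omega))
    have h2 := h (k + 1) (by omega)
    have h3 := h (k + 2) (by omega)
    rw [esymm_cons_succ] at h2
    rw [show k + 2 = (k + 1) + 1 from rfl, esymm_cons_succ] at h3
    have hN := newton_esymm s k
    by_contra hc
    push Not at hc
    have ha : 0 < a := by
      by_contra hna
      push Not at hna
      nlinarith
    have hN' : s.esymm k * s.esymm (k + 1 + 1) ≤ s.esymm (k + 1) ^ 2 := hN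
    nlinarith [mul_pos h1 h3, mul_nonneg (neg_nonneg.2 hc) h2.le]

end Algebra

section MatrixPart
open Polynomial

/-- Coefficientwise derivative of a curve of polynomials. -/
def PolyDeriv (P : ℝ → ℝ[X]) (Q : ℝ[X]) (s : ℝ) : Prop :=
  ∀ m, HasDerivAt (fun t => (P t).coeff m) (Q.coeff m) s

theorem PolyDeriv.mul {P R : ℝ → ℝ[X]} {P' R' : ℝ[X]} {s : ℝ}
    (hP : PolyDeriv P P' s) (hR : PolyDeriv R R' s) :
    PolyDeriv (fun t => P t * R t) (P' * R s + P s * R') s := by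
  intro m
  simp only [coeff_mul, coeff_add]
  rw [← Finset.sum_add_distrib]
  exact HasDerivAt.fun_sum fun x _ => (hP x.1).mul (hR x.2)

theorem PolyDeriv.prod {ι : Type*} [DecidableEq ι] (S : Finset ι) {P : ι → ℝ → ℝ[X]}
    {P' : ι → ℝ[X]} {s : ℝ} (h : ∀ i, PolyDeriv (P i) (P' i) s) :
    PolyDeriv (fun t => ∏ i ∈ S, P i t) (∑ i ∈ S, P' i * ∏ j ∈ S.erase i, P j s) s := by
  induction S using Finset.induction_on with
  | empty => intro m; simpa using hasDerivAt_const s ((1 : ℝ[X]).coeff m)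
  | insert a S ha ih =>
    have h1 := (h a).mul ih
    simp only [Finset.prod_insert ha]
    convert! h1 using 1
    rw [Finset.sum_insert ha, Finset.erase_insert ha, Finset.mul_sum]
    congr 1
    refine Finset.sum_congr rfl fun i hi => ?_
    have hia : a ≠ i := by rintro rfl; exact ha hi
    rw [Finset.erase_insert_of_ne hia, Finset.prod_insert (by simp [ha])]
    ring

theorem PolyDeriv.charpoly {n : ℕ} (H : ℝ → Matrix (Fin n) (Fin n) ℝ)
    (B : Matrix (Fin n) (Fin n) ℝ) (d : Fin n → ℝ)
    (hH : ∀ i j, HasDerivAt (fun t => H t i j) (B i j) 0) (h0 : H 0 = Matrix.diagonal d) :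
    PolyDeriv (fun t => (H t).charpoly)
      (- ∑ i, C (B i i) * ∏ j ∈ Finset.univ.erase i, (X - C (d j))) 0 := by
  have hent : ∀ i j, PolyDeriv (fun t => Matrix.charmatrix (H t) i j) (- C (B i j)) 0 := by
    intro i j m
    simp only [Matrix.charmatrix_apply, coeff_sub, coeff_neg, coeff_C]
    by_cases hm : m = 0
    · simp only [hm, if_true]
      simpa using (hH i j).const_sub ((Matrix.diagonal (fun _ => (X : ℝ[X])) i j).coeff 0)
    · simp only [hm, if_false]
      simpa using hasDerivAt_const (0 : ℝ) ((Matrix.diagonal (fun _ => (X : ℝ[X])) i j).coeff m - 0)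
  have hperm : ∀ σ : Equiv.Perm (Fin n), PolyDeriv
      (fun t => ∏ i, Matrix.charmatrix (H t) (σ i) i)
      (if σ = 1 then - ∑ i, C (B i i) * ∏ j ∈ Finset.univ.erase i, (X - C (d j)) else 0) 0 := by
    intro σ
    have h := PolyDeriv.prod Finset.univ (fun i => hent (σ i) i)
    convert! h using 1
    split_ifs with hσ
    · subst hσ
      rw [← Finset.sum_neg_distrib]
      refine Finset.sum_congr rfl fun i _ => ?_
      rw [neg_mul]
      congr 2
      refine Finset.prod_congr rfl fun j _ => ?_
      simp [h0, Matrix.charmatrix_apply]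
    · symm
      refine Finset.sum_eq_zero fun i _ => ?_
      have : ∃ j, j ≠ i ∧ σ j ≠ j := by
        by_contra hc
        push Not at hc
        apply hσ
        have hi : σ i = i := by
          by_contra hi
          have := hc (σ i) hi
          exact hi (σ.injective this)
        ext j
        by_cases hj : j = i
        · simp [hj, hi]
        · simp [hc j hj]
      obtain ⟨j, hji, hσj⟩ := this
      rw [Finset.prod_eq_zero (i := j) (by simp [hji])
        (by simp [h0, Matrix.charmatrix_apply, hσj]), mul_zero]
  intro m
  simp only [Matrix.charpoly, Matrix.det_apply, finsetSum_coeff]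
  have key : HasDerivAt (fun t => ∑ σ : Equiv.Perm (Fin n),
      (Equiv.Perm.sign σ • ∏ i, Matrix.charmatrix (H t) (σ i) i).coeff m)
      (∑ σ : Equiv.Perm (Fin n), (Equiv.Perm.sign σ • (if σ = 1 then - ∑ i, C (B i i) * ∏ j ∈ Finset.univ.erase i, (X - C (d j)) else (0 : ℝ[X]))).coeff m) 0 := by
    refine HasDerivAt.fun_sum fun σ _ => ?_
    have := hperm σ m
    rcases Int.units_eq_one_or (Equiv.Perm.sign σ) with hs | hs
    · simpa [hs] using this
    · simp only [hs, Units.neg_smul, one_smul, coeff_neg]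
      exact this.neg
  convert! key using 1
  refine Eq.symm ((Finset.sum_eq_single (1 : Equiv.Perm (Fin n)) ?_ ?_).trans ?_)
  · intro σ _ hσ
    simp only [hσ, if_false, smul_zero, coeff_zero]
  · simp
  · simp only [if_true, Equiv.Perm.sign_one, one_smul]

theorem matSk_diag_esymm {n k : ℕ} (hk : k ≤ n) (M : Matrix (Fin n) (Fin n) ℝ) (d : Fin n → ℝ)
    (hM : M.charpoly = ∏ i, (X - C (d i))) :
    matSk n k M = (Finset.univ.val.map d).esymm k := by
  have hc : Multiset.card (Finset.univ.val.map d) = n := by simp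
  have := Multiset.prod_X_sub_C_coeff (Finset.univ.val.map d) (k := n - k) (by rw [hc]; omega)
  rw [hc, Multiset.map_map] at this
  rw [matSk, hM]
  have e : (∏ i, (X - C (d i))) = (Multiset.map ((fun t => X - C t) ∘ d) Finset.univ.val).prod := rfl
  rw [e, this, show n - (n - k) = k by omega, ← mul_assoc, ← mul_pow]
  simp

theorem ellip {n k : ℕ} (hk1 : 1 ≤ k) (hkn : k ≤ n) (H : ℝ → Matrix (Fin n) (Fin n) ℝ)
    (B : Matrix (Fin n) (Fin n) ℝ)
    (hH : ∀ i j, HasDerivAt (fun t => H t i j) (B i j) 0)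
    (hsymm : (H 0).IsSymm)
    (hpos : ∀ j, 1 ≤ j → j ≤ k → 0 < matSk n j (H 0))
    (hconst : ∀ᶠ t in 𝓝 (0 : ℝ), matSk n k (H t) = 1)
    (hneg : ∀ q : Euc n, q ≠ 0 → ∑ a, ∑ b, q a * B a b * q b < 0) : False := by
  have hA : (H 0).IsHermitian := by
    rw [Matrix.IsHermitian, Matrix.conjTranspose_eq_transpose_of_trivial]; exact hsymm
  set d := hA.eigenvalues with hd
  set U : Matrix (Fin n) (Fin n) ℝ := (hA.eigenvectorUnitary : Matrix (Fin n) (Fin n) ℝ) with hU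
  have hUU : U * star U = 1 := Unitary.coe_mul_star_self hA.eigenvectorUnitary
  set K : ℝ → Matrix (Fin n) (Fin n) ℝ := fun t => star U * H t * U with hK
  have hK0 : K 0 = Matrix.diagonal d := by
    have := hA.conjStarAlgAut_star_eigenvectorUnitary
    rw [Unitary.conjStarAlgAut_star_apply] at this
    rw [hK]
    exact this
  have hKc : ∀ t, (K t).charpoly = (H t).charpoly := by
    intro t
    rw [hK]
    simp only
    rw [Matrix.charpoly_mul_comm, ← mul_assoc, hUU, one_mul]
  have hKd : ∀ i j, HasDerivAt (fun t => K t i j) ((star U * B * U) i j) 0 := by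
    intro i j
    simp only [hK, Matrix.mul_apply]
    refine HasDerivAt.fun_sum fun a _ => HasDerivAt.mul_const ?_ _
    exact HasDerivAt.fun_sum fun b _ => HasDerivAt.const_mul _ (hH _ _)
  have hD := PolyDeriv.charpoly K _ d hKd hK0 (n - k)
  have hBneg : ∀ i, (star U * B * U) i i < 0 := by
    intro i
    have hq := hneg (hA.eigenvectorBasis i) (by
      intro h0
      have := hA.eigenvectorBasis.norm_eq_one i
      rw [h0] at this; simp at this)
    convert hq using 1
    rw [Matrix.mul_apply]
    simp only [Matrix.mul_apply, Finset.sum_mul]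
    rw [Finset.sum_comm]
    rfl
  have hdiag : (H 0).charpoly = ∏ i, (X - C (d i)) := by
    rw [← hKc, hK0, Matrix.charpoly_diagonal]
  have hes : ∀ j, j ≤ k → 0 < (Finset.univ.val.map d).esymm j := by
    intro j hj
    rcases Nat.eq_zero_or_pos j with rfl | hj0
    · simp [esymm_zero']
    · rw [← matSk_diag_esymm (hj.trans hkn) _ d hdiag]
      exact hpos j hj0 hj
  have hei : ∀ i, 0 < (((Finset.univ.erase i).val.map d)).esymm (k - 1) := by
    intro i
    apply garding (d i)
    intro j hj
    have : d i ::ₘ (Finset.univ.erase i).val.map d = Finset.univ.val.map d := by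
      rw [← Multiset.map_cons, ← Finset.insert_val_of_notMem (by simp), Finset.insert_erase (by simp)]
    rw [this]
    exact hes j (by omega)
  -- derivative of constant
  have hz : (- ∑ i, C ((star U * B * U) i i) *
      ∏ j ∈ Finset.univ.erase i, (X - C (d j))).coeff (n - k) = 0 := by
    have hc : HasDerivAt (fun t => (-1 : ℝ) ^ k * ((K t).charpoly).coeff (n - k)) 0 0 := by
      refine (hasDerivAt_const (0 : ℝ) (1 : ℝ)).congr_of_eventuallyEq ?_
      filter_upwards [hconst] with t ht
      rw [hKc]; exact ht
    have := (hD.const_mul ((-1 : ℝ) ^ k)).unique hc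
    simpa using this
  have hcoef : ∀ i, (∏ j ∈ Finset.univ.erase i, (X - C (d j))).coeff (n - k) =
      (-1) ^ (k - 1) * ((Finset.univ.erase i).val.map d).esymm (k - 1) := by
    intro i
    have hc : Multiset.card ((Finset.univ.erase i).val.map d) = n - 1 := by
      simp
    have := Multiset.prod_X_sub_C_coeff ((Finset.univ.erase i).val.map d) (k := n - k)
      (by rw [hc]; omega)
    rw [hc, Multiset.map_map, show n - 1 - (n - k) = k - 1 by omega] at this
    exact this
  rw [coeff_neg, finsetSum_coeff] at hz
  simp only [coeff_C_mul, hcoef] at hz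
  have hz2 : ∑ i, (star U * B * U) i i * ((Finset.univ.erase i).val.map d).esymm (k - 1) = 0 := by
    have h1 : (-1 : ℝ) ^ (k - 1) * ∑ i, (star U * B * U) i i *
        ((Finset.univ.erase i).val.map d).esymm (k - 1) = 0 := by
      rw [Finset.mul_sum, ← neg_eq_zero, ← hz]
      congr 1
      refine Finset.sum_congr rfl fun i _ => by ring
    simpa using h1
  have : ∑ i, (star U * B * U) i i * ((Finset.univ.erase i).val.map d).esymm (k - 1) < 0 := by
    have : Nonempty (Fin n) := ⟨⟨0, by omega⟩⟩
    refine Finset.sum_neg (fun i _ => mul_neg_of_neg_of_pos (hBneg i) (hei i)) Finset.univ_nonempty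
  linarith

end MatrixPart

section AnalysisPart

theorem second_deriv_nonpos {f f' : ℝ → ℝ} {c : ℝ}
    (hf : ∀ᶠ t in 𝓝 (0 : ℝ), HasDerivAt f (f' t) t) (hf' : HasDerivAt f' c 0)
    (hmax : IsLocalMax f 0) : c ≤ 0 := by
  by_contra hc
  push Not at hc
  have e1 : deriv f =ᶠ[𝓝 0] f' := hf.mono fun t ht => ht.deriv
  have e2 : deriv (deriv f) 0 = c := by rw [e1.deriv_eq]; exact hf'.deriv
  have hmin : IsLocalMin f 0 := isLocalMin_of_deriv_deriv_pos (by rw [e2]; exact hc)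
    hmax.deriv_eq_zero hf.self_of_nhds.continuousAt
  have hconst : f =ᶠ[𝓝 0] fun _ => f 0 := by
    filter_upwards [hmin, hmax] with t h1 h2
    exact le_antisymm h2 h1
  have e3 : deriv f =ᶠ[𝓝 0] fun _ => 0 := by
    have := hconst.deriv
    simpa using this
  rw [e3.deriv_eq] at e2
  simp at e2
  linarith

theorem euc_expand {n : ℕ} (q : Euc n) : q = ∑ a, q a • ebasis n a := by
  ext i
  simp [ebasis, Finset.sum_apply, Pi.single_apply]

theorem line_comp {E F : Type*} [NormedAddCommGroup E] [NormedSpace ℝ E]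
    [NormedAddCommGroup F] [NormedSpace ℝ F] {G : E → F} {T : E →L[ℝ] F} {g : ℝ → E} {q : E} {t : ℝ}
    (hG : HasFDerivAt G T (g t)) (hg : HasDerivAt g q t) :
    HasDerivAt (fun s => G (g s)) (T q) t := hG.comp_hasDerivAt t hg

theorem no_interior_max {n k : ℕ} (hk1 : 1 ≤ k) (hkn : k ≤ n)
    {Ω : Set (Euc n)} (hopen : IsOpen Ω) {u : Euc n → ℝ}
    (hu3 : ContDiffOn ℝ 3 u Ω) (hconv : KConvexOn n k u Ω)
    (heq : ∀ x ∈ Ω, SkHess n k u x = 1) (e : Euc n) {ε : ℝ} (hε : 0 < ε)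
    {x₀ : Euc n} (hx₀ : x₀ ∈ Ω)
    (hmax : IsLocalMax (fun x => fderiv ℝ u x e + ε * ‖x‖ ^ 2) x₀) : False := by
  set G : Euc n → Euc n →L[ℝ] Euc n →L[ℝ] ℝ := fderiv ℝ (fderiv ℝ u) with hG
  have hC1 : ContDiffOn ℝ 2 (fderiv ℝ u) Ω := hu3.fderiv_of_isOpen hopen (by norm_num)
  have hC2 : ContDiffOn ℝ 1 G Ω := hC1.fderiv_of_isOpen hopen (by norm_num)
  have hd1 : ∀ x ∈ Ω, HasFDerivAt (fderiv ℝ u) (G x) x := fun x hx =>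
    ((hC1.differentiableOn (by norm_num)).differentiableAt (hopen.mem_nhds hx)).hasFDerivAt
  set T : Euc n →L[ℝ] Euc n →L[ℝ] Euc n →L[ℝ] ℝ := fderiv ℝ G x₀ with hT
  have hd2 : HasFDerivAt G T x₀ :=
    ((hC2.differentiableOn (by norm_num)).differentiableAt (hopen.mem_nhds hx₀)).hasFDerivAt
  have hGsymm : ∀ x ∈ Ω, ∀ a b, G x a b = G x b a := fun x hx a b =>
    ((hu3.contDiffAt (hopen.mem_nhds hx)).isSymmSndFDerivAt (by simp; norm_num)) a b
  have hTsymm : ∀ a b, T a b = T b a := fun a b =>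
    ((hC1.contDiffAt (hopen.mem_nhds hx₀)).isSymmSndFDerivAt (by simp)) a b
  have hline : ∀ (q : Euc n) (t : ℝ), HasDerivAt (fun s : ℝ => x₀ + s • q) q t := by
    intro q t
    simpa using ((hasDerivAt_id t).smul_const q).const_add x₀
  have hlineΩ : ∀ q : Euc n, ∀ᶠ t in 𝓝 (0 : ℝ), x₀ + t • q ∈ Ω := by
    intro q
    have : ContinuousAt (fun s : ℝ => x₀ + s • q) 0 := (hline q 0).continuousAt
    apply this
    simpa using hopen.mem_nhds hx₀
  have hGline : ∀ q a b : Euc n, HasDerivAt (fun s : ℝ => G (x₀ + s • q) a b) (T q a b) 0 := by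
    intro q a b
    have h1 : HasFDerivAt G T (x₀ + (0 : ℝ) • q) := by simpa using hd2
    have h2 : HasDerivAt (fun s : ℝ => G (x₀ + s • q)) (T q) 0 :=
      line_comp (F := Euc n →L[ℝ] Euc n →L[ℝ] ℝ) (g := fun s : ℝ => x₀ + s • q) h1 (hline q 0)
    have h3 := (h2.clm_apply (hasDerivAt_const (0 : ℝ) a)).clm_apply (hasDerivAt_const (0 : ℝ) b)
    simpa using h3
  have hTsymm2 : ∀ q a b, T q a b = T q b a := by
    intro q a b
    refine (hGline q a b).unique ((hGline q b a).congr_of_eventuallyEq ?_)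
    filter_upwards [hlineΩ q] with t ht
    exact hGsymm _ ht _ _
  have hhess : ∀ x i j, hessMat n u x i j = G x (ebasis n i) (ebasis n j) := by
    intro x i j
    simp [hessMat, iteratedFDeriv_two_apply, hG]
  have hneg : ∀ q : Euc n, q ≠ 0 → T e q q < 0 := by
    intro q hq
    have hT3 : T e q q = T q q e := by rw [hTsymm e q, hTsymm2]
    have hnq : 0 < ‖q‖ ^ 2 := by positivity
    have hw : ∀ t : ℝ, HasDerivAt (fun s : ℝ => ε * ‖x₀ + s • q‖ ^ 2)
        (ε * (2 * inner ℝ (x₀ + t • q) q)) t := fun t => ((hline q t).norm_sq).const_mul ε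
    have hw2 : HasDerivAt (fun s : ℝ => ε * (2 * inner ℝ (x₀ + s • q) q))
        (ε * (2 * ‖q‖ ^ 2)) 0 := by
      have := (hline q 0).inner ℝ (hasDerivAt_const (0 : ℝ) q)
      have := (this.const_mul (2 : ℝ)).const_mul ε
      simpa using this
    have h1 : ∀ᶠ t in 𝓝 (0 : ℝ), HasDerivAt
        (fun s : ℝ => fderiv ℝ u (x₀ + s • q) e + ε * ‖x₀ + s • q‖ ^ 2)
        (G (x₀ + t • q) q e + ε * (2 * inner ℝ (x₀ + t • q) q)) t := by
      filter_upwards [hlineΩ q] with t ht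
      have h2 := (hd1 _ ht).comp_hasDerivAt t (hline q t)
      have h3 := h2.clm_apply (hasDerivAt_const t e)
      have h4 : HasDerivAt (fun s : ℝ => fderiv ℝ u (x₀ + s • q) e) (G (x₀ + t • q) q e) t := by
        simpa using h3
      exact h4.add (hw t)
    have hm : IsLocalMax (fun s : ℝ => fderiv ℝ u (x₀ + s • q) e + ε * ‖x₀ + s • q‖ ^ 2) 0 := by
      have hc : Tendsto (fun s : ℝ => x₀ + s • q) (𝓝 0) (𝓝 x₀) := by
        have : ContinuousAt (fun s : ℝ => x₀ + s • q) 0 := (hline q 0).continuousAt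
        simpa [ContinuousAt] using this
      have := hc.eventually hmax
      filter_upwards [this] with t ht
      simpa using ht
    have := second_deriv_nonpos h1 ((hGline q q e).add hw2) hm
    rw [hT3]
    nlinarith [mul_pos hε hnq]
  refine ellip hk1 hkn (fun t => hessMat n u (x₀ + t • e))
    (Matrix.of fun i j => T e (ebasis n i) (ebasis n j)) ?_ ?_ ?_ ?_ ?_
  · intro i j
    simp only [hhess]
    exact hGline e _ _
  · ext i j
    simp only [Matrix.transpose_apply, hhess, zero_smul, add_zero]
    exact hGsymm _ hx₀ _ _
  · simpa using hconv x₀ hx₀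
  · filter_upwards [hlineΩ e] with t ht
    exact heq _ ht
  · intro q hq
    have := hneg q hq
    convert this using 1
    conv_rhs => rw [euc_expand q]
    simp only [map_sum, map_smul, _root_.sum_apply, _root_.smul_apply,
      smul_eq_mul, Matrix.of_apply, Finset.mul_sum]
    rw [Finset.sum_comm]
    refine Finset.sum_congr rfl fun a _ => Finset.sum_congr rfl fun b _ => by ring

end AnalysisPart

/-- maximum principle for the gradient, cf. Lemma 2.4: for a `k`-convex
solution of `S_k(D²u) = 1` in a bounded domain `Ω` of class `C³(Ω) ∩ C¹(Ω̄)`, the maximum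
of `|Du|` over `Ω̄` is attained on `∂Ω`. -/
theorem statement6 (n k : ℕ) (hk1 : 1 ≤ k) (hkn : k ≤ n)
    (Ω : Set (Euc n)) (hopen : IsOpen Ω) (hbd : Bornology.IsBounded Ω)
    (hconn : IsConnected Ω)
    (u : Euc n → ℝ)
    (hu3 : ContDiffOn ℝ 3 u Ω)
    (hu1 : ∃ U : Set (Euc n), IsOpen U ∧ closure Ω ⊆ U ∧ ContDiffOn ℝ 1 u U)
    (hconv : KConvexOn n k u Ω)
    (heq : ∀ x ∈ Ω, SkHess n k u x = 1) :
    ∃ x ∈ frontier Ω, ∀ y ∈ closure Ω, ‖fderiv ℝ u y‖ ≤ ‖fderiv ℝ u x‖ := by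
  obtain ⟨V, hVo, hVs, hV1⟩ := hu1
  have hcont : ContinuousOn (fderiv ℝ u) (closure Ω) :=
    (hV1.continuousOn_fderiv_of_isOpen hVo le_rfl).mono hVs
  have hcomp : IsCompact (closure Ω) := hbd.isCompact_closure
  have hfc : IsCompact (frontier Ω) := hcomp.of_isClosed_subset isClosed_frontier
    frontier_subset_closure
  have : Nonempty (Fin n) := ⟨⟨0, by omega⟩⟩
  have hfne : (frontier Ω).Nonempty := by
    rw [nonempty_frontier_iff]
    refine ⟨hconn.nonempty, ?_⟩
    rintro rfl
    exact NormedSpace.unbounded_univ ℝ (Euc n) hbd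
  obtain ⟨x, hx, hxmax⟩ := hfc.exists_isMaxOn hfne
    ((hcont.mono frontier_subset_closure).norm)
  refine ⟨x, hx, fun y hy => ?_⟩
  have main : ∀ e : Euc n, fderiv ℝ u y e ≤ ‖fderiv ℝ u x‖ * ‖e‖ := by
    intro e
    by_contra hc
    push Not at hc
    obtain ⟨R, hR⟩ := hcomp.isBounded.exists_norm_le
    set δ := fderiv ℝ u y e - ‖fderiv ℝ u x‖ * ‖e‖ with hδ
    have hδ0 : 0 < δ := by linarith
    have hR2 : 0 < R ^ 2 + 1 := by positivity
    set ε := δ / (R ^ 2 + 1) with hεd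
    have hε : 0 < ε := by positivity
    have hεR : ε * R ^ 2 < δ := by
      have : ε * (R ^ 2 + 1) = δ := by rw [hεd]; field_simp
      linarith
    have hwc : ContinuousOn (fun z => fderiv ℝ u z e + ε * ‖z‖ ^ 2) (closure Ω) :=
      (hcont.clm_apply continuousOn_const).add (by fun_prop)
    obtain ⟨x₀, hx₀, hx₀max⟩ := hcomp.exists_isMaxOn ⟨y, hy⟩ hwc
    have h1 : fderiv ℝ u y e + ε * ‖y‖ ^ 2 ≤ fderiv ℝ u x₀ e + ε * ‖x₀‖ ^ 2 := hx₀max hy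
    have hin : x₀ ∈ Ω := by
      by_contra hn
      have hf : x₀ ∈ frontier Ω := by
        rw [frontier, hopen.interior_eq]; exact ⟨hx₀, hn⟩
      have h2 : ‖fderiv ℝ u x₀‖ ≤ ‖fderiv ℝ u x‖ := hxmax hf
      have h3 : fderiv ℝ u x₀ e ≤ ‖fderiv ℝ u x‖ * ‖e‖ :=
        (le_abs_self _).trans (((fderiv ℝ u x₀).le_opNorm e).trans
          (mul_le_mul_of_nonneg_right h2 (norm_nonneg e)))
      have h4 : ‖x₀‖ ^ 2 ≤ R ^ 2 := by
        have := hR x₀ hx₀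
        have := norm_nonneg x₀
        gcongr
      have h5 : ε * ‖x₀‖ ^ 2 ≤ ε * R ^ 2 := mul_le_mul_of_nonneg_left h4 hε.le
      have h6 : 0 ≤ ε * ‖y‖ ^ 2 := by positivity
      linarith
    exact no_interior_max hk1 hkn hopen hu3 hconv heq e hε hin
      (hx₀max.isLocalMax (mem_of_superset (hopen.mem_nhds hin) subset_closure))
  refine ContinuousLinearMap.opNorm_le_bound _ (norm_nonneg _) fun e => ?_
  rw [Real.norm_eq_abs, abs_le]
  refine ⟨?_, main e⟩
  have := main (-e)
  simp only [map_neg, norm_neg] at this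
  linarith
end
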